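/- Attainability on the zero-momentum hyperplane without reversing time: Assume Φ is admissible and generic. Let e denote the constant vector (0,…,0, 1, 0,…,0) ∈ ℝ^{2n} in the p₁-direction. Then for any two points x̃, x̂ ∈ Π there exist m ∈ ℕ and a finite sequence x̃ = z₀, z₁, …, z_m = x̂ of points of Π such that each step z_{i+1} is obtained from z_i in one of the following three ways: (i) z_{i+1} = x(t) for some t ≥ 0 and some solution x of the free system ẋ = f(x) with x(0) = z_i; (ii) z_{i+1} = x(t) − e for some t ≥ 0 and some free solution x with x(0) = z_i + e; (iii) z_{i+1} = x(t) + e for some t ≥ 0 and some free solution x with x(0) = z_i − e. (That is, every point of Π is attainable from every point of Π by compositions of the diffeomorphisms e^{g}∘e^{tf}∘e^{−g}, e^{−g}∘e^{tf}∘e^{g}, e^{tf} with t ≥ 0.) -/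

import Mathlib

/-!
Conjugating the drift `f` by the translation by `u • e`, `u ∈ {-1, 0, 1}`, gives the field
`f + u ∂/∂q₁` (`driftU`), so the three kinds of steps are the motions along `f` and `f ± ∂/∂q₁` for
nonnegative times. The drift is complete by conservation of energy (`exists_drift_flow`), and its
flow is `C¹` (`IsFlow.contDiff`).

*Attainable sets have interior* (`exists_interior`). Among the immersed families of points
attainable from `x`, take one of largest dimension. The driving fields are tangent to all such
families, since otherwise a time parameter could be added (`Imm.append`), and hence so are their
brackets (`Tan.bracket`). The derivatives along `q₁` of the bracket of `∂/∂q₁` with `f` are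
combinations of `∂/∂p₂ - ∂/∂p₁` and `∂/∂pₙ - ∂/∂p₁` whose coefficients are the Taylor coefficients of
`Φ''` and of its reflection; by genericity they span both directions
(`Generic.eq_zero_of_iteratedDeriv`). Going around the cycle one particle at a time, where the
factors `Φ''(q_j - q_{j+1})` can be divided out because the zeros of `Φ''` are isolated
(`Tan.isolate`), one obtains all directions of the hyperplane (`tan_all`).

*The interior of the attainable set is dense* (`mem_closure_attain`). In the centre-of-mass frame
the free motion preserves volume and bounded open regions, because `Φ` is bounded below and tends to
`+∞` at `+∞` (`volume_image_chi`, `isBounded_region`). As in Poincaré's recurrence theorem, this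
implies that the closure `D` of the interior of the attainable set is also invariant under the
reversed free motion (`flow_neg_mem_closure`). So `D` is tangent to `f`, `-f` and `f ± ∂/∂q₁`, hence to
their sums, and to their translates by vectors under which `D` is invariant. A field tangent to `D`
and constant along its own integral lines has these lines contained in `D`
(`QuasiTangent.integrate`). Thus `D` is invariant under the translations along `∂/∂q₁`, and, by
genericity and the induction around the cycle again, under all translations of zero total momentum
(`mem_transSub`); so `D` is the whole hyperplane.

*Conclusion* (`reach_all`). Reversal of momenta exchanges the attainable set with the set of points
from which a given point is attainable, so the latter has interior points too, and therefore meets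
the dense set of interior points of the former.
-/

open scoped BigOperators
open MeasureTheory Filter Set

noncomputable section

/-- The state space ℝ^{2n}, with coordinates (q,p). -/
abbrev State (n : ℕ) := (Fin n → ℝ) × (Fin n → ℝ)

/-- The drift vector field of the periodic multiparticle system,
`f(q,p) = Σ p_k ∂/∂q_k + Σ (φ(q_{k-1}-q_k) - φ(q_k-q_{k+1})) ∂/∂p_k` with `φ = Φ'`,
with cyclic indexing in `Fin n`. -/
def drift (n : ℕ) [NeZero n] (Φ : ℝ → ℝ) (x : State n) : State n :=
  (x.2, fun k => deriv Φ (x.1 (k - 1) - x.1 k) - deriv Φ (x.1 k - x.1 (k + 1)))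

/-- The momentum coordinate vector `e_{p_j} = ∂/∂p_j`. -/
def ep (n : ℕ) [NeZero n] (j : Fin n) : State n := (0, Pi.single j 1)

/-- The position coordinate vector `e_{q_j} = ∂/∂q_j`. -/
def eq' (n : ℕ) [NeZero n] (j : Fin n) : State n := (Pi.single j 1, 0)

/-- `Φ` is admissible: real analytic, bounded below, and `Φ(y) → +∞` as `y → +∞`. -/
def Admissible (Φ : ℝ → ℝ) : Prop :=
  (∀ x, AnalyticAt ℝ Φ x) ∧ BddBelow (Set.range Φ) ∧ Tendsto Φ atTop atTop

/-- `Φ` is generic: for no `b` is `Φ''` even or odd about `b`. -/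
def Generic (Φ : ℝ → ℝ) : Prop :=
  ∀ b : ℝ,
    (¬ ∀ t : ℝ, deriv (deriv Φ) (b + t) = deriv (deriv Φ) (b - t)) ∧
    (¬ ∀ t : ℝ, deriv (deriv Φ) (b + t) = - deriv (deriv Φ) (b - t))

/-- Lie bracket of vector fields: `[X,Y](x) = DY(x)·X(x) − DX(x)·Y(x)`. -/
def lieBracket {n : ℕ} (X Y : State n → State n) : State n → State n :=
  fun x => fderiv ℝ Y x (X x) - fderiv ℝ X x (Y x)

/-- Admissible trajectory of the single forced system `ẋ = f(x) + u(t) g`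
(in absolutely-continuous/integral form). -/
def IsTrajectory (n : ℕ) [NeZero n] (Φ : ℝ → ℝ) (θ : ℝ) (u : ℝ → ℝ)
    (x : ℝ → State n) : Prop :=
  ContinuousOn x (Set.Icc 0 θ) ∧
  ∀ t ∈ Set.Icc 0 θ,
    x t = x 0 + ∫ s in (0:ℝ)..t, (drift n Φ (x s) + u s • ep n 0)

/-- `z'` is reachable from `z` by the free flow `e^{tf}` in some nonnegative time. -/
def FreeReach (n : ℕ) [NeZero n] (Φ : ℝ → ℝ) (z z' : State n) : Prop :=
  ∃ t ≥ (0:ℝ), ∃ x : ℝ → State n,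
    x 0 = z ∧ (∀ s ∈ Set.Icc 0 t, HasDerivAt x (drift n Φ (x s)) s) ∧ x t = z'

/-- One step by a diffeomorphism of the family
`{e^{g}∘e^{tf}∘e^{−g}, e^{−g}∘e^{tf}∘e^{g}, e^{tf} : t ≥ 0}`, where the time-1 flow of
`±g` is translation by `± e` with `e = ep n 0` the `p₁`-direction. -/
def Step (n : ℕ) [NeZero n] (Φ : ℝ → ℝ) (z z' : State n) : Prop :=
  FreeReach n Φ z z' ∨
  FreeReach n Φ (z + ep n 0) (z' + ep n 0) ∨
  FreeReach n Φ (z - ep n 0) (z' - ep n 0)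

/-! ### Growth estimates and dependence on initial conditions -/

set_option linter.unusedSectionVars false

open Metric Topology
open scoped NNReal

section ODE

variable {E : Type*} [NormedAddCommGroup E] [NormedSpace ℝ E] [FiniteDimensional ℝ E]

lemma exists_lipschitz_on_ball {F : Type*} [NormedAddCommGroup F] [NormedSpace ℝ F]
    {Y : E → F} (hY : ContDiff ℝ 1 Y) (R : ℝ) :
    ∃ K : ℝ≥0, LipschitzOnWith K Y (closedBall 0 R) := by
  have hc : Continuous (fun z => ‖fderiv ℝ Y z‖₊) := (hY.continuous_fderiv one_ne_zero).nnnorm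
  obtain ⟨C, hC⟩ := (isCompact_closedBall (0:E) R).bddAbove_image hc.continuousOn
  refine ⟨C, (convex_closedBall 0 R).lipschitzOnWith_of_nnnorm_fderiv_le
    (fun x _ => (hY.differentiable one_ne_zero) x) (fun x hx => hC ⟨x, hx, rfl⟩)⟩

/-- Second-order Taylor estimate, uniform on balls. -/
lemma exists_taylor_on_ball {Y : E → E} (hY : ContDiff ℝ 2 Y) (R : ℝ) :
    ∃ K : ℝ≥0, (∀ a ∈ closedBall (0:E) R, ∀ b ∈ closedBall (0:E) R,
      ‖Y a - Y b - fderiv ℝ Y b (a - b)‖ ≤ K * ‖a - b‖ ^ 2) ∧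
      (∀ a ∈ closedBall (0:E) R, ∀ b ∈ closedBall (0:E) R,
      ‖fderiv ℝ Y a - fderiv ℝ Y b‖ ≤ K * ‖a - b‖) := by
  have h1 : ContDiff ℝ 1 (fderiv ℝ Y) := hY.fderiv_right (by norm_num)
  obtain ⟨K, hK⟩ := exists_lipschitz_on_ball h1 R
  refine ⟨K, fun a ha b hb => ?_, fun a ha b hb => by
    simpa [dist_eq_norm] using hK.dist_le_mul a ha b hb⟩
  have hseg : segment ℝ b a ⊆ closedBall (0:E) R := (convex_closedBall 0 R).segment_subset hb ha
  have := (convex_segment (𝕜 := ℝ) b a).norm_image_sub_le_of_norm_hasFDerivWithin_le'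
    (f := Y) (f' := fderiv ℝ Y) (φ := fderiv ℝ Y b) (C := K * ‖a - b‖)
    (fun x _ => ((hY.differentiable two_ne_zero) x).hasFDerivAt.hasFDerivWithinAt)
    (fun x hx => ?_) (left_mem_segment ℝ b a) (right_mem_segment ℝ b a)
  · calc _ ≤ _ := this
      _ = _ := by ring
  · have h2 := hK.dist_le_mul x (hseg hx) b hb
    rw [dist_eq_norm, dist_eq_norm] at h2
    refine h2.trans ?_
    gcongr
    rw [← dist_eq_norm, ← dist_eq_norm, dist_comm a b]
    have := dist_add_dist_of_mem_segment hx
    have h3 := dist_nonneg (x := x) (y := a)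
    rw [dist_comm b x] at this
    linarith

/-- Grönwall's inequality on `[0,1]`, with a cruder explicit constant. -/
lemma norm_le_of_linear_growth {h h' : ℝ → E} {K ε : ℝ} (hK : 0 ≤ K) (hε : 0 ≤ ε)
    (hd : ∀ t ∈ Icc (0:ℝ) 1, HasDerivWithinAt h (h' t) (Icc 0 1) t)
    (hb : ∀ t ∈ Icc (0:ℝ) 1, ‖h' t‖ ≤ K * ‖h t‖ + ε) :
    ∀ t ∈ Icc (0:ℝ) 1, ‖h t‖ ≤ (‖h 0‖ + ε) * Real.exp (K + 1) := by
  intro t ht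
  -- Replacing `K` by `K + 1` makes the Grönwall constant positive.
  have := norm_le_gronwallBound_of_norm_deriv_right_le (f := h) (f' := h') (δ := ‖h 0‖)
    (K := K + 1) (ε := ε) (a := 0) (b := 1)
    (fun s hs => (hd s hs).continuousWithinAt)
    (fun s hs => ((hd s (Ico_subset_Icc_self hs)).mono_of_mem_nhdsWithin
      (Icc_mem_nhdsGE_of_mem hs))) le_rfl
    (fun s hs => (hb s (Ico_subset_Icc_self hs)).trans
      (by nlinarith [norm_nonneg (h s)])) t ht
  refine this.trans ?_
  rw [gronwallBound_of_K_ne_0 (by positivity), sub_zero]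
  have h1 : Real.exp ((K + 1) * t) ≤ Real.exp (K + 1) := by
    apply Real.exp_le_exp.mpr; nlinarith [ht.2]
  have h2 : ε / (K + 1) ≤ ε := div_le_self hε (by linarith)
  have h3 : 0 ≤ ε / (K + 1) := by positivity
  have h4 : 1 ≤ Real.exp ((K + 1) * t) := Real.one_le_exp (by nlinarith [ht.1])
  nlinarith [norm_nonneg (h 0), mul_le_mul h2 h1 (by positivity) hε]

/-- A `C²` cut-off function equal to `1` on a given ball. -/
lemma exists_truncation (R : ℝ) (hR : 0 < R) :
    ∃ η : E → ℝ, ContDiff ℝ 2 η ∧ (∀ z, 0 ≤ η z ∧ η z ≤ 1) ∧ (∀ z ∈ closedBall (0:E) R, η z = 1) ∧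
      HasCompactSupport η := by
  let b : ContDiffBump (0:E) := ⟨R, R + 1, hR, by linarith⟩
  exact ⟨b, b.contDiff, fun z => ⟨b.nonneg, b.le_one⟩,
    fun z hz => b.one_of_mem_closedBall hz, b.hasCompactSupport⟩

/-- A linear ODE with continuous coefficients is solvable on the whole of `[0,1]`. -/
lemma exists_linear_ode (A : ℝ → E →L[ℝ] E) (hA : ContinuousOn A (Icc 0 1)) (h0 : E) :
    ∃ h : ℝ → E, h 0 = h0 ∧
      ∀ t ∈ Icc (0:ℝ) 1, HasDerivWithinAt h (A t (h t)) (Icc 0 1) t := by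
  obtain ⟨K, hK⟩ := isCompact_Icc.exists_bound_of_continuousOn hA
  have hK0 : 0 ≤ K := (norm_nonneg _).trans (hK 0 (by simp))
  set R := ‖h0‖ * Real.exp (K + 1) + 1 with hR
  have hRpos : 0 < R := by positivity
  obtain ⟨η, hη, hη1, hη2, hη3⟩ := exists_truncation (E := E) R hRpos
  have hg : ContDiff ℝ 1 (fun z : E => η z • z) := (hη.smul contDiff_id).of_le (by norm_num)
  have hgs : HasCompactSupport (fun z : E => η z • z) := hη3.smul_right
  obtain ⟨C, hC⟩ := ContDiff.lipschitzWith_of_hasCompactSupport hgs hg one_ne_zero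
  obtain ⟨B, hB⟩ := hgs.exists_bound_of_continuous hg.continuous
  have hB0 : 0 ≤ B := (norm_nonneg _).trans (hB 0)
  lift K to ℝ≥0 using hK0
  lift B to ℝ≥0 using hB0
  have hPL : IsPicardLindelof (fun t z => A t (η z • z)) (tmin := 0) (tmax := 1) ⟨0, by simp⟩
      h0 (K * B) 0 (K * B) (K * C) := by
    refine ⟨fun t ht => ?_, fun x _ => ?_, fun t ht x _ => ?_, ?_⟩
    · refine (LipschitzWith.weaken ((A t).lipschitz.comp hC) ?_).lipschitzOnWith
      gcongr
      exact_mod_cast hK t ht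
    · exact hA.clm_apply continuousOn_const
    · push_cast
      exact ((A t).le_opNorm _).trans
        (mul_le_mul (hK t ht) (hB x) (norm_nonneg _) (by positivity))
    · simp
  obtain ⟨h, hh0, hh⟩ := hPL.exists_eq_forall_mem_Icc_hasDerivWithinAt₀
  have hh0 : h 0 = h0 := hh0
  refine ⟨h, hh0, fun t ht => ?_⟩
  have hb := norm_le_of_linear_growth (K := K) (ε := 0) (by positivity) le_rfl hh (fun t ht => by
    rw [add_zero]
    refine ((A t).le_opNorm _).trans (mul_le_mul (hK t ht) ?_ (norm_nonneg _) (by positivity))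
    rw [norm_smul, Real.norm_of_nonneg (hη1 _).1]
    exact mul_le_of_le_one_left (norm_nonneg _) (hη1 _).2) t ht
  have := hh t ht
  rwa [hη2 (h t) (by rw [mem_closedBall_zero_iff, hR, ← hh0]; linarith), one_smul] at this

/-- **Differentiable dependence on initial conditions.** The family `γ` of solutions on `[0,1]` of
`ẋ = Y x` is differentiable in the initial point, the derivative `M` solves the variational
equation, and it depends continuously on the initial point. -/
theorem exists_variational {Y : E → E} (hY : ContDiff ℝ 2 Y) {γ : E → ℝ → E}
    (hγ0 : ∀ w, γ w 0 = w)
    (hγ : ∀ w, ∀ t ∈ Icc (0:ℝ) 1, HasDerivWithinAt (γ w) (Y (γ w t)) (Icc 0 1) t)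
    (hbd : ∀ r : ℝ, ∃ R : ℝ, ∀ w ∈ closedBall (0:E) r, ∀ t ∈ Icc (0:ℝ) 1,
      γ w t ∈ closedBall (0:E) R) :
    ∃ M : E → ℝ → (E →L[ℝ] E), (∀ w, M w 0 = ContinuousLinearMap.id ℝ E) ∧
      (∀ w, ∀ t ∈ Icc (0:ℝ) 1,
        HasDerivWithinAt (M w) ((fderiv ℝ Y (γ w t)).comp (M w t)) (Icc 0 1) t) ∧
      (∀ t ∈ Icc (0:ℝ) 1, ∀ w, HasFDerivAt (fun w => γ w t) (M w t) w) ∧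
      (∀ t ∈ Icc (0:ℝ) 1, Continuous (fun w => M w t)) := by
  have hYc : Continuous (fderiv ℝ Y) := hY.continuous_fderiv two_ne_zero
  have hγc : ∀ w, ContinuousOn (γ w) (Icc 0 1) := fun w t ht => (hγ w t ht).continuousWithinAt
  have hex : ∀ w, ∃ M : ℝ → (E →L[ℝ] E), M 0 = ContinuousLinearMap.id ℝ E ∧
      ∀ t ∈ Icc (0:ℝ) 1,
        HasDerivWithinAt M ((fderiv ℝ Y (γ w t)).comp (M t)) (Icc 0 1) t := by
    intro w
    obtain ⟨M, hM0, hM⟩ := exists_linear_ode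
      (fun t => ContinuousLinearMap.compL ℝ E E E (fderiv ℝ Y (γ w t)))
      ((ContinuousLinearMap.compL ℝ E E E).continuous.comp_continuousOn
        (hYc.comp_continuousOn (hγc w))) (ContinuousLinearMap.id ℝ E)
    exact ⟨M, hM0, hM⟩
  choose M hM0 hM using hex
  -- Uniform constants on the ball of radius `r`.
  have hunif : ∀ r : ℝ, ∃ R : ℝ, ∃ K : ℝ≥0, ∃ C : ℝ≥0, ∃ P : ℝ≥0,
      (∀ w ∈ closedBall (0:E) r, ∀ t ∈ Icc (0:ℝ) 1, γ w t ∈ closedBall (0:E) R) ∧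
      (∀ a ∈ closedBall (0:E) R, ‖fderiv ℝ Y a‖ ≤ K) ∧
      ((∀ a ∈ closedBall (0:E) R, ∀ b ∈ closedBall (0:E) R,
        ‖Y a - Y b - fderiv ℝ Y b (a - b)‖ ≤ C * ‖a - b‖ ^ 2) ∧
      (∀ a ∈ closedBall (0:E) R, ∀ b ∈ closedBall (0:E) R,
        ‖fderiv ℝ Y a - fderiv ℝ Y b‖ ≤ C * ‖a - b‖)) ∧
      (∀ w ∈ closedBall (0:E) r, ∀ w' ∈ closedBall (0:E) r, ∀ t ∈ Icc (0:ℝ) 1,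
        ‖γ w t - γ w' t‖ ≤ P * ‖w - w'‖) ∧
      (∀ w ∈ closedBall (0:E) r, ∀ t ∈ Icc (0:ℝ) 1, ‖M w t‖ ≤ P) := by
    intro r
    obtain ⟨R, hR⟩ := hbd r
    obtain ⟨K, hK⟩ := (isCompact_closedBall (0:E) R).exists_bound_of_continuousOn
      hYc.continuousOn
    obtain ⟨C, hC⟩ := exists_taylor_on_ball hY R
    have hmax : ∀ a ∈ closedBall (0:E) R, ‖fderiv ℝ Y a‖ ≤ max K 0 :=
      fun a ha => (hK a ha).trans (le_max_left _ _)
    have hlip : ∀ a ∈ closedBall (0:E) R, ∀ b ∈ closedBall (0:E) R,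
        ‖Y a - Y b‖ ≤ max K 0 * ‖a - b‖ := fun a ha b hb =>
      (convex_closedBall (0:E) R).norm_image_sub_le_of_norm_fderiv_le
        (fun x _ => (hY.differentiable two_ne_zero) x) hmax hb ha
    set P : ℝ := (1 + ‖ContinuousLinearMap.id ℝ E‖) * Real.exp (max K 0 + 1) with hP
    have hP0 : 0 ≤ P := by positivity
    refine ⟨R, ⟨max K 0, le_max_right _ _⟩, C, ⟨P, hP0⟩, hR, hmax, hC, ?_, ?_⟩
    · intro w hw w' hw' t ht
      have := norm_le_of_linear_growth (h := fun t => γ w t - γ w' t) (K := max K 0) (ε := 0)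
        (le_max_right _ _) le_rfl (fun s hs => (hγ w s hs).sub (hγ w' s hs))
        (fun s hs => by
          rw [add_zero]; exact hlip _ (hR w hw s hs) _ (hR w' hw' s hs)) t ht
      simp only [hγ0, add_zero] at this
      refine this.trans ?_
      rw [mul_comm]
      change _ ≤ P * _
      gcongr
      rw [hP]
      refine le_mul_of_one_le_left (by positivity) ?_
      linarith [norm_nonneg (ContinuousLinearMap.id ℝ E)]
    · intro w hw t ht
      have := norm_le_of_linear_growth (h := M w) (K := max K 0) (ε := 0)
        (le_max_right _ _) le_rfl (hM w)
        (fun s hs => by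
          rw [add_zero]
          refine (ContinuousLinearMap.opNorm_comp_le _ _).trans ?_
          gcongr
          exact hmax _ (hR w hw s hs)) t ht
      rw [hM0] at this
      refine this.trans ?_
      change _ ≤ P
      rw [hP]
      exact mul_le_mul_of_nonneg_right (by linarith) (by positivity)
  refine ⟨M, hM0, hM, fun t ht w => ?_, fun t ht => ?_⟩
  · obtain ⟨R, K, C, P, hR, hK, ⟨hC1, hC2⟩, hP1, hP2⟩ := hunif (‖w‖ + 1)
    have hw : w ∈ closedBall (0:E) (‖w‖ + 1) := by simp
    -- The remainder is quadratic in the increment.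
    have key : ∀ w' ∈ closedBall (0:E) (‖w‖ + 1),
        ‖γ w' t - γ w t - M w t (w' - w)‖ ≤
          (C * P ^ 2 * Real.exp (K + 1)) * ‖w' - w‖ ^ 2 := by
      intro w' hw'
      have := norm_le_of_linear_growth (h := fun t => γ w' t - γ w t - M w t (w' - w))
        (h' := fun t => Y (γ w' t) - Y (γ w t) - fderiv ℝ Y (γ w t) (M w t (w' - w)))
        (K := K) (ε := C * (P * ‖w' - w‖) ^ 2)
        K.2 (by positivity) (fun s hs => ((hγ w' s hs).sub (hγ w s hs)).sub (by
          have h1 := (hM w s hs).clm_apply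
            (hasDerivWithinAt_const s (Icc 0 1) (w' - w))
          simpa using h1))
        (fun s hs => by
          have e : Y (γ w' s) - Y (γ w s) - fderiv ℝ Y (γ w s) (M w s (w' - w)) =
            fderiv ℝ Y (γ w s) (γ w' s - γ w s - M w s (w' - w)) +
            (Y (γ w' s) - Y (γ w s) - fderiv ℝ Y (γ w s) (γ w' s - γ w s)) := by
            simp only [map_sub]; abel
          rw [e]
          refine (norm_add_le _ _).trans (add_le_add ?_ ?_)
          · exact ((fderiv ℝ Y (γ w s)).le_opNorm _).trans
              (by gcongr; exact hK _ (hR w hw s hs))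
          · refine (hC1 _ (hR w' hw' s hs) _ (hR w hw s hs)).trans ?_
            gcongr
            exact hP1 w' hw' w hw s hs) t ht
      simp only [hγ0, hM0, ContinuousLinearMap.id_apply, sub_self, norm_zero, zero_add] at this
      refine this.trans (le_of_eq ?_)
      ring
    rw [hasFDerivAt_iff_isLittleO]
    refine Asymptotics.IsBigO.trans_isLittleO (g := fun w' => ‖w' - w‖ ^ 2) ?_ ?_
    · refine Asymptotics.IsBigO.of_bound (C * P ^ 2 * Real.exp (K + 1)) ?_
      filter_upwards [closedBall_mem_nhds w one_pos] with w' hw'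
      rw [norm_pow, norm_norm]
      apply key
      rw [mem_closedBall_zero_iff]
      rw [mem_closedBall, dist_eq_norm] at hw'
      linarith [norm_le_norm_add_norm_sub' w' w]
    · exact Asymptotics.isLittleO_pow_sub_sub w one_lt_two
  · rw [continuous_iff_continuousAt]
    intro w
    obtain ⟨R, K, C, P, hR, hK, ⟨hC1, hC2⟩, hP1, hP2⟩ := hunif (‖w‖ + 1)
    have hw : w ∈ closedBall (0:E) (‖w‖ + 1) := by simp
    have key : ∀ w' ∈ closedBall (0:E) (‖w‖ + 1),
        ‖M w' t - M w t‖ ≤ (C * P * P * Real.exp (K + 1)) * ‖w' - w‖ := by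
      intro w' hw'
      have := norm_le_of_linear_growth (h := fun t => M w' t - M w t)
        (K := K) (ε := (C * (P * ‖w' - w‖)) * P)
        K.2 (by positivity) (fun s hs => (hM w' s hs).sub (hM w s hs))
        (fun s hs => by
          have e : (fderiv ℝ Y (γ w' s)).comp (M w' s) - (fderiv ℝ Y (γ w s)).comp (M w s) =
            (fderiv ℝ Y (γ w' s)).comp (M w' s - M w s) +
            (fderiv ℝ Y (γ w' s) - fderiv ℝ Y (γ w s)).comp (M w s) := by
            ext v; simp
          rw [e]
          refine (norm_add_le _ _).trans (add_le_add ?_ ?_)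
          · refine (ContinuousLinearMap.opNorm_comp_le _ _).trans ?_
            gcongr
            exact hK _ (hR w' hw' s hs)
          · refine (ContinuousLinearMap.opNorm_comp_le _ _).trans ?_
            gcongr
            · refine (hC2 _ (hR w' hw' s hs) _ (hR w hw s hs)).trans ?_
              gcongr
              exact hP1 w' hw' w hw s hs
            · exact hP2 w hw s hs) t ht
      simp only [hM0, sub_self, norm_zero, zero_add] at this
      refine this.trans (le_of_eq ?_)
      ring
    rw [ContinuousAt, tendsto_iff_norm_sub_tendsto_zero]
    have hlim : Tendsto (fun w' : E => (C * P * P * Real.exp (K + 1)) * ‖w' - w‖) (𝓝 w) (𝓝 0) := by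
      have : Continuous (fun w' : E => (C * P * P * Real.exp (K + 1)) * ‖w' - w‖) := by fun_prop
      simpa using this.tendsto w
    refine squeeze_zero' (Eventually.of_forall fun _ => norm_nonneg _) ?_ hlim
    filter_upwards [closedBall_mem_nhds w one_pos] with w' hw'
    apply key
    rw [mem_closedBall_zero_iff]
    rw [mem_closedBall, dist_eq_norm] at hw'
    linarith [norm_le_norm_add_norm_sub' w' w]

end ODE

/-! ### Complete flows -/

section Flow

variable {E : Type*} [NormedAddCommGroup E] [NormedSpace ℝ E] [FiniteDimensional ℝ E]

/-- `ψ t z` is the value at time `t` of the solution of `ẋ = Y x` starting at `z`; the flow is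
complete and bounded on bounded sets of times and initial points. -/
structure IsFlow (Y : E → E) (ψ : ℝ → E → E) : Prop where
  zero : ∀ z, ψ 0 z = z
  deriv : ∀ z t, HasDerivAt (fun s => ψ s z) (Y (ψ t z)) t
  bdd : ∀ r T : ℝ, ∃ R : ℝ, ∀ z ∈ closedBall (0:E) r, ∀ t, |t| ≤ T → ψ t z ∈ closedBall (0:E) R

lemma solution_unique {Y : E → E} (hY : ContDiff ℝ 1 Y) {x y : ℝ → E} {T : ℝ}
    (hx : ∀ t ∈ Ioo (-T) T, HasDerivAt x (Y (x t)) t)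
    (hy : ∀ t ∈ Ioo (-T) T, HasDerivAt y (Y (y t)) t) (h0 : x 0 = y 0) :
    EqOn x y (Ioo (-T) T) := by
  intro t ht
  obtain ⟨S, hS1, hS2⟩ := exists_between (abs_lt.mpr ht)
  have hsub : Icc (-S) S ⊆ Ioo (-T) T := fun s hs => ⟨by linarith [hs.1], by linarith [hs.2]⟩
  obtain ⟨A, hA⟩ := isCompact_Icc.exists_bound_of_continuousOn
    (fun s hs => (hx s (hsub hs)).continuousAt.continuousWithinAt : ContinuousOn x (Icc (-S) S))
  obtain ⟨B, hB⟩ := isCompact_Icc.exists_bound_of_continuousOn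
    (fun s hs => (hy s (hsub hs)).continuousAt.continuousWithinAt : ContinuousOn y (Icc (-S) S))
  obtain ⟨K, hK⟩ := exists_lipschitz_on_ball hY (max A B)
  have ht' : t ∈ Ioo (-S) S := abs_lt.mp hS1
  refine ODE_solution_unique_of_mem_Ioo (v := fun _ => Y) (s := fun _ => closedBall 0 (max A B))
    (t₀ := 0) (fun _ _ => hK) ⟨by linarith [abs_nonneg t], by linarith [abs_nonneg t]⟩
    (fun s hs => ⟨hx s (hsub (Ioo_subset_Icc_self hs)), ?_⟩)
    (fun s hs => ⟨hy s (hsub (Ioo_subset_Icc_self hs)), ?_⟩) h0 ht'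
  · exact mem_closedBall_zero_iff.mpr ((hA s (Ioo_subset_Icc_self hs)).trans (le_max_left _ _))
  · exact mem_closedBall_zero_iff.mpr ((hB s (Ioo_subset_Icc_self hs)).trans (le_max_right _ _))

/-- A smooth vector field is complete as soon as there is an a priori bound, on every bounded time
interval, for the solutions of all the fields obtained from it by rescaling by a factor in
`[0,1]`. -/
theorem exists_flow {Y : E → E} (hY : ContDiff ℝ 1 Y)
    (hap : ∀ r T : ℝ, ∃ R : ℝ, ∀ η : E → ℝ, (∀ z, 0 ≤ η z ∧ η z ≤ 1) → ∀ x : ℝ → E, ‖x 0‖ ≤ r →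
      (∀ t ∈ Ioo (-T) T, HasDerivAt x (η (x t) • Y (x t)) t) → ∀ t ∈ Ioo (-T) T, ‖x t‖ ≤ R) :
    ∃ ψ, IsFlow Y ψ := by
  have hloc : ∀ (z : E) (T : ℝ), ∃ x : ℝ → E, x 0 = z ∧
      ∀ t ∈ Ioo (-T) T, HasDerivAt x (Y (x t)) t := by
    intro z T
    rcases le_or_gt T 0 with hT | hT
    · exact ⟨fun _ => z, rfl, fun t ht => absurd (ht.1.trans ht.2) (by linarith)⟩
    obtain ⟨R, hR⟩ := hap ‖z‖ T
    obtain ⟨η, hη, hη1, hη2, hη3⟩ := exists_truncation (E := E) (max R 1) (by positivity)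
    have hg : ContDiff ℝ 1 (fun z : E => η z • Y z) := (hη.of_le (by norm_num)).smul hY
    have hgs : HasCompactSupport (fun z : E => η z • Y z) := hη3.smul_right
    obtain ⟨C, hC⟩ := ContDiff.lipschitzWith_of_hasCompactSupport hgs hg one_ne_zero
    obtain ⟨B, hB⟩ := hgs.exists_bound_of_continuous hg.continuous
    have hB0 : 0 ≤ B := (norm_nonneg _).trans (hB 0)
    lift B to ℝ≥0 using hB0
    have hPL : IsPicardLindelof (fun _ z => η z • Y z) (tmin := -T) (tmax := T)
        ⟨0, by constructor <;> linarith⟩ z (B * ⟨T, hT.le⟩) 0 B C := by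
      refine IsPicardLindelof.of_time_independent (fun x _ => hB x) hC.lipschitzOnWith ?_
      simp only [NNReal.coe_zero, sub_zero, zero_sub, neg_neg,
        max_self]
      exact le_rfl
    obtain ⟨x, hx0, hx⟩ := hPL.exists_eq_forall_mem_Icc_hasDerivWithinAt₀
    have hx0 : x 0 = z := hx0
    have hx' : ∀ t ∈ Ioo (-T) T, HasDerivAt x (η (x t) • Y (x t)) t := fun t ht =>
      (hx t (Ioo_subset_Icc_self ht)).hasDerivAt (Icc_mem_nhds ht.1 ht.2)
    refine ⟨x, hx0, fun t ht => ?_⟩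
    have h1 := hR η hη1 x (by rw [hx0]) hx' t ht
    have h2 := hx' t ht
    rwa [hη2 _ (mem_closedBall_zero_iff.mpr (h1.trans (le_max_left _ _))), one_smul] at h2
  choose x hx0 hx using hloc
  have hder : ∀ z t, HasDerivAt (fun s => x z (|s| + 1) s) (Y (x z (|t| + 1) t)) t := by
    intro z t
    have hag : ∀ s, |s| < |t| + 1 → x z (|s| + 1) s = x z (|t| + 2) s := by
      intro s hs
      refine solution_unique hY (T := |s| + 1) (hx z _) (fun u hu => hx z _ u ?_) (by simp [hx0])
        (abs_lt.mp (by linarith))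
      exact ⟨by linarith [hu.1], by linarith [hu.2]⟩
    rw [hag t (by linarith)]
    refine (hx z (|t| + 2) t (abs_lt.mp (by linarith))).congr_of_eventuallyEq ?_
    have : ∀ᶠ s in 𝓝 t, |s| < |t| + 1 :=
      continuous_abs.continuousAt.eventually_lt continuousAt_const (by simp)
    filter_upwards [this] with s hs using hag s hs
  refine ⟨fun t z => x z (|t| + 1) t, fun z => hx0 _ _, hder, fun r T => ?_⟩
  obtain ⟨R, hR⟩ := hap r (T + 1)
  refine ⟨R, fun z hz t ht => mem_closedBall_zero_iff.mpr ?_⟩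
  refine hR (fun _ => 1) (by simp) (fun s => x z (|s| + 1) s) ?_ (fun s _ => ?_) t
    (abs_lt.mp (by linarith))
  · simpa [hx0] using hz
  · simpa using hder z s

namespace IsFlow

variable {Y : E → E} {ψ : ℝ → E → E}

lemma unique (h : IsFlow Y ψ) (hY : ContDiff ℝ 1 Y) {x : ℝ → E}
    (hx : ∀ t, HasDerivAt x (Y (x t)) t) (t : ℝ) : x t = ψ t (x 0) :=
  solution_unique hY (T := |t| + 1) (fun s _ => hx s) (fun s _ => h.deriv (x 0) s)
    (h.zero _).symm (abs_lt.mp (by linarith))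

lemma add (h : IsFlow Y ψ) (hY : ContDiff ℝ 1 Y) (s t : ℝ) (z : E) :
    ψ (s + t) z = ψ s (ψ t z) := by
  have := h.unique hY (x := fun s => ψ (s + t) z)
    (fun s => by simpa using (h.deriv z (s + t)).comp_add_const s t) s
  simpa using this

lemma neg_cancel (h : IsFlow Y ψ) (hY : ContDiff ℝ 1 Y) (t : ℝ) (z : E) :
    ψ (-t) (ψ t z) = z := by rw [← h.add hY]; simp [h.zero]

lemma cancel_neg (h : IsFlow Y ψ) (hY : ContDiff ℝ 1 Y) (t : ℝ) (z : E) :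
    ψ t (ψ (-t) z) = z := by rw [← h.add hY]; simp [h.zero]

/-- The flow is jointly `C¹`: parametrising the solution through `z` over `[0,t]` by `[0,1]`, time
becomes part of the initial condition. -/
theorem contDiff (h : IsFlow Y ψ) (hY : ContDiff ℝ 2 Y) :
    ContDiff ℝ 1 (fun p : ℝ × E => ψ p.1 p.2) := by
  have hY' : ContDiff ℝ 2 (fun p : ℝ × E => ((0:ℝ), p.1 • Y p.2)) :=
    contDiff_const.prodMk (contDiff_fst.smul (hY.comp contDiff_snd))
  obtain ⟨M, -, -, h1, h2⟩ := exists_variational hY'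
    (γ := fun w τ => (w.1, ψ (w.1 * τ) w.2)) (fun w => by simp [h.zero])
    (fun w t _ => (hasDerivAt_const t w.1).prodMk (by
      have := (h.deriv w.2 (w.1 * t)).scomp t ((hasDerivAt_id t).const_mul w.1)
      rwa [mul_one] at this) |>.hasDerivWithinAt)
    (fun r => by
      obtain ⟨R, hR⟩ := h.bdd r r
      refine ⟨max r R, fun w hw t ht => ?_⟩
      rw [mem_closedBall_zero_iff, Prod.norm_def, max_le_iff] at hw
      rw [mem_closedBall_zero_iff, Prod.norm_def]
      refine max_le_max hw.1 ?_
      refine mem_closedBall_zero_iff.mp (hR _ (mem_closedBall_zero_iff.mpr hw.2) _ ?_)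
      rw [abs_mul, abs_of_nonneg ht.1]
      exact (mul_le_of_le_one_right (abs_nonneg _) ht.2).trans hw.1)
  have key : ∀ w, HasFDerivAt (fun p : ℝ × E => ψ p.1 p.2)
      ((ContinuousLinearMap.snd ℝ ℝ E).comp (M w 1)) w := fun w => by
    have := (h1 1 (by simp) w).snd
    simpa using this
  rw [contDiff_one_iff_hasFDerivAt]
  exact ⟨_, continuous_const.clm_comp (h2 1 (by simp)), key⟩

lemma contDiff_time (h : IsFlow Y ψ) (hY : ContDiff ℝ 2 Y) (t : ℝ) : ContDiff ℝ 1 (ψ t) :=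
  (h.contDiff hY).comp (contDiff_const.prodMk contDiff_id)

lemma fderiv_zero (h : IsFlow Y ψ) (z : E) :
    fderiv ℝ (ψ 0) z = ContinuousLinearMap.id ℝ E := by
  have : ψ 0 = id := funext h.zero
  rw [this, fderiv_id]

/-- The variational equation. -/
theorem hasDerivWithinAt_fderiv (h : IsFlow Y ψ) (hY : ContDiff ℝ 2 Y) (z : E) (t : ℝ)
    (ht : t ∈ Icc (0:ℝ) 1) :
    HasDerivWithinAt (fun s => fderiv ℝ (ψ s) z)
      ((fderiv ℝ Y (ψ t z)).comp (fderiv ℝ (ψ t) z)) (Icc 0 1) t := by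
  obtain ⟨M, -, h2, h1, -⟩ := exists_variational hY (γ := fun w τ => ψ τ w) h.zero
    (fun w t _ => (h.deriv w t).hasDerivWithinAt)
    (fun r => by
      obtain ⟨R, hR⟩ := h.bdd r 1
      exact ⟨R, fun w hw t ht => hR w hw t (by rw [abs_of_nonneg ht.1]; exact ht.2)⟩)
  have e : ∀ s ∈ Icc (0:ℝ) 1, fderiv ℝ (ψ s) z = M z s := fun s hs => (h1 s hs z).fderiv
  rw [e t ht]
  exact (h2 z t ht).congr e (e t ht)

end IsFlow

end Flow

/-! ### The drift and its energy -/

section Drift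

lemma HasDerivAt.prod_fst {E F : Type*} [NormedAddCommGroup E] [NormedSpace ℝ E]
    [NormedAddCommGroup F] [NormedSpace ℝ F] {x : ℝ → E × F} {x' : E × F} {t : ℝ}
    (h : HasDerivAt x x' t) : HasDerivAt (fun t => (x t).1) x'.1 t :=
  (ContinuousLinearMap.fst ℝ E F).hasFDerivAt.comp_hasDerivAt t h

lemma HasDerivAt.prod_snd {E F : Type*} [NormedAddCommGroup E] [NormedSpace ℝ E]
    [NormedAddCommGroup F] [NormedSpace ℝ F] {x : ℝ → E × F} {x' : E × F} {t : ℝ}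
    (h : HasDerivAt x x' t) : HasDerivAt (fun t => (x t).2) x'.2 t :=
  (ContinuousLinearMap.snd ℝ E F).hasFDerivAt.comp_hasDerivAt t h

variable {n : ℕ} [NeZero n] {Φ : ℝ → ℝ}

lemma Admissible.analytic_deriv (h : Admissible Φ) (x : ℝ) : AnalyticAt ℝ (deriv Φ) x :=
  (h.1 x).deriv

lemma Admissible.analytic_deriv2 (h : Admissible Φ) (x : ℝ) : AnalyticAt ℝ (deriv (deriv Φ)) x :=
  (h.1 x).deriv.deriv

lemma Admissible.hasDerivAt (h : Admissible Φ) (x : ℝ) : HasDerivAt Φ (deriv Φ x) x :=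
  (h.1 x).differentiableAt.hasDerivAt

lemma Admissible.hasDerivAt_deriv (h : Admissible Φ) (x : ℝ) :
    HasDerivAt (deriv Φ) (deriv (deriv Φ) x) x :=
  (h.1 x).deriv.differentiableAt.hasDerivAt

lemma Admissible.contDiff_deriv (h : Admissible Φ) {m : WithTop ℕ∞} : ContDiff ℝ m (deriv Φ) :=
  contDiff_iff_contDiffAt.mpr fun x => (h.analytic_deriv x).contDiffAt

lemma contDiff_drift (h : Admissible Φ) {m : WithTop ℕ∞} : ContDiff ℝ m (drift n Φ) := by
  refine contDiff_snd.prodMk (contDiff_pi.mpr fun k => ?_)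
  have hq : ∀ j : Fin n, ContDiff ℝ m (fun x : State n => x.1 j) := fun j =>
    (contDiff_apply ℝ ℝ j).comp contDiff_fst
  exact (h.contDiff_deriv.comp ((hq _).sub (hq _))).sub
    (h.contDiff_deriv.comp ((hq _).sub (hq _)))

/-- The differential of the drift. -/
lemma fderiv_drift (h : Admissible Φ) (z v : State n) :
    fderiv ℝ (drift n Φ) z v = (v.2, fun k =>
      deriv (deriv Φ) (z.1 (k - 1) - z.1 k) * (v.1 (k - 1) - v.1 k) -
      deriv (deriv Φ) (z.1 k - z.1 (k + 1)) * (v.1 k - v.1 (k + 1))) := by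
  have h1 := ((contDiff_drift (n := n) h (m := 1)).differentiable one_ne_zero
    z).hasFDerivAt.hasLineDerivAt v
  refine HasDerivAt.unique h1 ?_
  have hl : ∀ a b : ℝ, HasDerivAt (fun t : ℝ => a + t * b) b 0 := fun a b => by
    simpa using ((hasDerivAt_id (0:ℝ)).mul_const b).const_add a
  refine HasDerivAt.prodMk ?_ (hasDerivAt_pi.mpr fun k => ?_)
  · exact hasDerivAt_pi.mpr fun k => by simpa using hl (z.2 k) (v.2 k)
  · have key : ∀ i j : Fin n, HasDerivAt
        (fun t : ℝ => deriv Φ ((z + t • v).1 i - (z + t • v).1 j))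
        (deriv (deriv Φ) (z.1 i - z.1 j) * (v.1 i - v.1 j)) 0 := fun i j => by
      have h2 : HasDerivAt (fun t : ℝ => (z + t • v).1 i - (z + t • v).1 j) (v.1 i - v.1 j) 0 := by
        simpa using (hl (z.1 i) (v.1 i)).fun_sub (hl (z.1 j) (v.1 j))
      have h3 := h.hasDerivAt_deriv ((z + (0:ℝ) • v).1 i - (z + (0:ℝ) • v).1 j)
      have h4 := h3.comp (0:ℝ) h2
      simp only [zero_smul, add_zero] at h4
      exact h4
    exact (key _ _).sub (key _ _)

/-- The total energy. -/
def energy (n : ℕ) [NeZero n] (Φ : ℝ → ℝ) (z : State n) : ℝ :=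
  ∑ k, (z.2 k) ^ 2 / 2 + ∑ k, Φ (z.1 k - z.1 (k + 1))

lemma continuous_energy (h : Admissible Φ) : Continuous (energy n Φ) := by
  have hΦ : Continuous Φ := continuous_iff_continuousAt.mpr fun x => (h.1 x).continuousAt
  unfold energy
  fun_prop

/-- Cyclic summation by parts. -/
lemma sum_cyclic (a u : Fin n → ℝ) :
    ∑ k, u k * (a (k - 1) - a k) = - ∑ k, a k * (u k - u (k + 1)) := by
  have : ∑ k, u k * a (k - 1) = ∑ k, u (k + 1) * a k := by
    rw [← Equiv.sum_comp (Equiv.addRight (1 : Fin n))]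
    simp
  simp only [mul_sub, Finset.sum_sub_distrib, this]
  simp only [mul_comm]
  ring

/-- Conservation of energy, along solutions of the drift run at any constant speed `c`. -/
lemma hasDerivAt_energy (h : Admissible Φ) {x : ℝ → State n} {c t : ℝ}
    (hx : HasDerivAt x (c • drift n Φ (x t)) t) : HasDerivAt (fun t => energy n Φ (x t)) 0 t := by
  have hq : ∀ k, HasDerivAt (fun t => (x t).1 k) (c * (x t).2 k) t := fun k => by
    have := hasDerivAt_pi.mp hx.prod_fst k
    simpa [drift] using this
  have hp : ∀ k, HasDerivAt (fun t => (x t).2 k) (c * (drift n Φ (x t)).2 k) t := fun k => by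
    have := hasDerivAt_pi.mp hx.prod_snd k
    simpa using this
  have h1 := (HasDerivAt.fun_sum (u := Finset.univ) fun k _ =>
      ((hp k).pow 2).div_const 2).add
    (HasDerivAt.fun_sum (u := Finset.univ) fun k _ =>
      (h.hasDerivAt ((x t).1 k - (x t).1 (k + 1))).comp t ((hq k).sub (hq (k + 1))))
  refine h1.congr_deriv ?_
  have h2 := sum_cyclic (fun k => deriv Φ ((x t).1 k - (x t).1 (k + 1))) (fun k => (x t).2 k)
  simp only [sub_add_cancel] at h2
  have h3 : ∀ k : Fin n, (((2:ℕ):ℝ) * (x t).2 k ^ (2 - 1) * (c * (drift n Φ (x t)).2 k)) / 2 =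
      c * ((x t).2 k * (deriv Φ ((x t).1 (k - 1) - (x t).1 k)
        - deriv Φ ((x t).1 k - (x t).1 (k + 1)))) := fun k => by
    simp [drift]; ring
  have h4 : ∀ k : Fin n, deriv Φ ((x t).1 k - (x t).1 (k + 1)) *
      (c * (x t).2 k - c * (x t).2 (k + 1)) = c * (deriv Φ ((x t).1 k - (x t).1 (k + 1)) *
        ((x t).2 k - (x t).2 (k + 1))) := fun k => by ring
  rw [Finset.sum_congr rfl fun k _ => h3 k, Finset.sum_congr rfl fun k _ => h4 k,
    ← Finset.mul_sum, ← Finset.mul_sum, h2]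
  ring

/-- The energy bounds the momenta. -/
lemma sq_le_of_energy {m : ℝ} (hm : ∀ y, m ≤ Φ y) (z : State n) (k : Fin n) :
    (z.2 k) ^ 2 ≤ 2 * (energy n Φ z - n * m) := by
  have h1 : (z.2 k) ^ 2 / 2 ≤ ∑ k, (z.2 k) ^ 2 / 2 :=
    Finset.single_le_sum (f := fun k => (z.2 k) ^ 2 / 2) (fun i _ => by positivity)
      (Finset.mem_univ k)
  have h2 : (n:ℝ) * m ≤ ∑ k, Φ (z.1 k - z.1 (k + 1)) := by
    have := Finset.card_nsmul_le_sum Finset.univ (fun k : Fin n => Φ (z.1 k - z.1 (k + 1))) m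
      (fun k _ => hm _)
    simpa using this
  unfold energy
  linarith

/-- The drift is complete: its solutions are bounded on bounded time intervals by conservation of
energy, `Φ` being bounded below. -/
theorem exists_drift_flow (n : ℕ) [NeZero n] (h : Admissible Φ) : ∃ ψ, IsFlow (drift n Φ) ψ := by
  refine exists_flow (contDiff_drift h) fun r T => ?_
  obtain ⟨m, hm⟩ := h.2.1
  have hm : ∀ y, m ≤ Φ y := fun y => hm ⟨y, rfl⟩
  obtain ⟨B, hB⟩ := (isCompact_closedBall (0 : State n) r).exists_bound_of_continuousOn
    (continuous_energy (n := n) h).continuousOn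
  set C := 2 * (B - n * m) + 1
  refine ⟨max (r + C * T) C, fun η hη x hx0 hx t ht => ?_⟩
  have hT : 0 < T := by linarith [ht.1, ht.2]
  have h0 : (0:ℝ) ∈ Ioo (-T) T := ⟨by linarith, hT⟩
  have hE : ∀ s ∈ Ioo (-T) T, energy n Φ (x s) = energy n Φ (x 0) := by
    intro s hs
    have := (convex_Ioo (-T) T).norm_image_sub_le_of_norm_hasDerivWithin_le (C := 0)
      (f := fun s => energy n Φ (x s)) (f' := fun _ => 0)
      (fun u hu => (hasDerivAt_energy h (hx u hu)).hasDerivWithinAt) (by simp) h0 hs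
    rw [zero_mul] at this
    exact sub_eq_zero.mp (norm_le_zero_iff.mp this)
  have hp : ∀ s ∈ Ioo (-T) T, ‖(x s).2‖ ≤ C := by
    intro s hs
    have hk : ∀ k, ((x s).2 k) ^ 2 ≤ 2 * (B - n * m) := fun k => by
      have h1 := sq_le_of_energy hm (x s) k
      have h2 := hB (x 0) (mem_closedBall_zero_iff.mpr hx0)
      rw [hE s hs] at h1
      have := (abs_le.mp h2).2
      linarith
    have hC : 0 ≤ C := by have := (sq_nonneg _).trans (hk 0); linarith
    refine (pi_norm_le_iff_of_nonneg hC).mpr fun k => ?_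
    have := hk k
    rw [Real.norm_eq_abs, abs_le]
    constructor <;> nlinarith
  have hC : 0 ≤ C := (norm_nonneg _).trans (hp 0 h0)
  rw [Prod.norm_def]
  refine max_le_max ?_ (hp t ht)
  have h1 := (convex_Ioo (-T) T).norm_image_sub_le_of_norm_hasDerivWithin_le (C := C)
      (f := fun s => (x s).1) (f' := fun s => (η (x s) • drift n Φ (x s)).1)
      (fun u hu => (hx u hu).prod_fst.hasDerivWithinAt) (fun u hu => by
        rw [Prod.smul_fst, norm_smul, Real.norm_of_nonneg (hη _).1]
        exact (mul_le_of_le_one_left (norm_nonneg _) (hη _).2).trans (hp u hu)) h0 ht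
  rw [sub_zero, Real.norm_eq_abs] at h1
  have h2 : C * |t| ≤ C * T := mul_le_mul_of_nonneg_left (abs_lt.mpr ht).le hC
  have h3 : ‖(x 0).1‖ ≤ r := (norm_fst_le _).trans hx0
  linarith [norm_le_norm_add_norm_sub' (x t).1 (x 0).1]

end Drift

/-! ### Symmetries of the free motion and Liouville's theorem -/

section DriftFlow

variable {n : ℕ} [NeZero n] {Φ : ℝ → ℝ} {ψ : ℝ → State n → State n}

lemma eq_of_hasDerivAt_zero {F : Type*} [NormedAddCommGroup F] [NormedSpace ℝ F] {x : ℝ → F}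
    (h : ∀ t, HasDerivAt x 0 t) (s t : ℝ) : x s = x t :=
  is_const_of_deriv_eq_zero (fun t => (h t).differentiableAt) (fun t => (h t).deriv) s t

lemma energy_flow (ha : Admissible Φ) (h : IsFlow (drift n Φ) ψ) (t : ℝ) (z : State n) :
    energy n Φ (ψ t z) = energy n Φ z := by
  have := eq_of_hasDerivAt_zero (x := fun t => energy n Φ (ψ t z))
    (fun t => hasDerivAt_energy ha (c := 1) (by simpa using h.deriv z t)) t 0
  simpa [h.zero] using this

lemma sum_drift (z : State n) : ∑ k, (drift n Φ z).2 k = 0 := by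
  have := sum_cyclic (n := n) (fun k => deriv Φ (z.1 k - z.1 (k + 1))) (fun _ => 1)
  simpa [drift] using this

lemma sum_flow_snd (h : IsFlow (drift n Φ) ψ) (t : ℝ) (z : State n) :
    ∑ k, (ψ t z).2 k = ∑ k, z.2 k := by
  have := eq_of_hasDerivAt_zero (x := fun t => ∑ k, (ψ t z).2 k)
    (fun t => by
      have := HasDerivAt.fun_sum (u := Finset.univ)
        fun k (_ : k ∈ Finset.univ) => hasDerivAt_pi.mp (h.deriv z t).prod_snd k
      exact this.congr_deriv (sum_drift _)) t 0
  simpa [h.zero] using this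

/-- The centre of mass moves uniformly. -/
lemma sum_flow_fst (h : IsFlow (drift n Φ) ψ) (t : ℝ) (z : State n) :
    ∑ k, (ψ t z).1 k = ∑ k, z.1 k + t * ∑ k, z.2 k := by
  have := eq_of_hasDerivAt_zero (x := fun t => ∑ k, (ψ t z).1 k - t * ∑ k, z.2 k)
    (fun t => by
      have h1 := HasDerivAt.fun_sum (u := Finset.univ)
        fun k (_ : k ∈ Finset.univ) => hasDerivAt_pi.mp (h.deriv z t).prod_fst k
      refine (h1.fun_sub ((hasDerivAt_id t).mul_const (∑ k, z.2 k))).congr_deriv ?_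
      simp [drift, sum_flow_snd h]) t 0
  simp only [h.zero] at this
  linarith

/-- Galilean invariance. -/
lemma flow_add_const (ha : Admissible Φ) (h : IsFlow (drift n Φ) ψ) (t c : ℝ) (z : State n) :
    ψ t (z + (0, fun _ => c)) = ψ t z + (fun _ => t * c, fun _ => c) := by
  have h1 : ∀ s, HasDerivAt (fun s => ψ s z + ((fun _ => s * c, fun _ => c) : State n))
      (drift n Φ (ψ s z + ((fun _ => s * c, fun _ => c) : State n))) s := fun s => by
    have h2 : HasDerivAt (fun s : ℝ => ((fun _ => s * c, fun _ => c) : State n))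
        (fun _ => c, 0) s := by
      refine (hasDerivAt_pi.mpr fun k => ?_).prodMk (hasDerivAt_const _ _)
      simpa using (hasDerivAt_id s).mul_const c
    refine ((h.deriv z s).fun_add h2).congr_deriv ?_
    ext k <;> simp [drift]
  have := h.unique (contDiff_drift ha) h1 t
  rw [this, h.zero]
  congr 1
  ext k <;> simp

/-- Reversal of momenta. -/
def rev (z : State n) : State n := (z.1, -z.2)

lemma rev_rev (z : State n) : rev (rev z) = z := by simp [rev]

lemma continuous_rev : Continuous (rev (n := n)) := by unfold rev; fun_prop

/-- Reversibility of the motion. -/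
lemma flow_rev (ha : Admissible Φ) (h : IsFlow (drift n Φ) ψ) (t : ℝ) (z : State n) :
    ψ t (rev z) = rev (ψ (-t) z) := by
  have h1 : ∀ s, HasDerivAt (fun s => rev (ψ (-s) z)) (drift n Φ (rev (ψ (-s) z))) s := fun s => by
    have h2 := (h.deriv z (-s)).scomp s (hasDerivAt_neg s)
    refine (h2.prod_fst.prodMk h2.prod_snd.neg).congr_deriv ?_
    simp [drift, rev]
  have := h.unique (contDiff_drift ha) h1 t
  rw [this]
  simp [h.zero]

/-- The canonical symplectic form. -/
def symp (n : ℕ) [NeZero n] : LinearMap.BilinForm ℝ (State n) :=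
  LinearMap.mk₂ ℝ (fun v w => ∑ k, (v.1 k * w.2 k - v.2 k * w.1 k))
    (fun v v' w => by rw [← Finset.sum_add_distrib]; congr 1; ext k; simp; ring)
    (fun c v w => by simp only [smul_eq_mul, Finset.mul_sum]; congr 1; ext k; simp; ring)
    (fun v w w' => by rw [← Finset.sum_add_distrib]; congr 1; ext k; simp; ring)
    (fun c v w => by simp only [smul_eq_mul, Finset.mul_sum]; congr 1; ext k; simp; ring)

lemma symp_apply (v w : State n) : symp n v w = ∑ k, (v.1 k * w.2 k - v.2 k * w.1 k) := rfl

lemma symp_nondegenerate : (symp n).Nondegenerate := by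
  have h1 : ∀ v : State n, symp n v (-v.2, v.1) = ∑ k, (v.1 k ^ 2 + v.2 k ^ 2) := fun v => by
    rw [symp_apply]; congr 1; ext k; simp; ring
  have h0 : ∀ v : State n, ∑ k, (v.1 k ^ 2 + v.2 k ^ 2) = 0 → v = 0 := fun v hv => by
    rw [Finset.sum_eq_zero_iff_of_nonneg (fun k _ => by positivity)] at hv
    ext k
    · have := hv k (Finset.mem_univ k); simp; nlinarith [sq_nonneg (v.1 k), sq_nonneg (v.2 k)]
    · have := hv k (Finset.mem_univ k); simp; nlinarith [sq_nonneg (v.1 k), sq_nonneg (v.2 k)]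
  have h2 : ∀ v : State n, symp n (v.2, -v.1) v = ∑ k, (v.1 k ^ 2 + v.2 k ^ 2) := fun v => by
    rw [symp_apply]; congr 1; ext k; simp; ring
  exact ⟨fun v hv => h0 v (by rw [← h1, hv]), fun v hv => h0 v (by rw [← h2, hv])⟩

/-- Linear symplectic maps preserve volume. -/
lemma abs_det_of_symp (A : State n →ₗ[ℝ] State n) (hA : ∀ v w, symp n (A v) (A w) = symp n v w) :
    |LinearMap.det A| = 1 := by
  classical
  let b := Module.finBasis ℝ (State n)
  have h1 : (symp n).comp A A = symp n := LinearMap.ext₂ hA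
  have h2 := LinearMap.BilinForm.toMatrix_comp b b (symp n) A A
  rw [h1] at h2
  have h3 := congrArg Matrix.det h2
  rw [Matrix.det_mul, Matrix.det_mul, Matrix.det_transpose, LinearMap.det_toMatrix] at h3
  have h4 := (LinearMap.BilinForm.nondegenerate_iff_det_ne_zero b).mp (symp_nondegenerate (n := n))
  have h5 : LinearMap.det A ^ 2 = 1 := by
    apply mul_right_cancel₀ h4
    linear_combination -h3
  rw [← sq_abs] at h5
  exact (pow_eq_one_iff_of_nonneg (abs_nonneg _) two_ne_zero).mp h5

/-- The differential of the drift is infinitesimally symplectic. -/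
lemma symp_fderiv_drift (ha : Admissible Φ) (z v w : State n) :
    symp n (fderiv ℝ (drift n Φ) z v) w + symp n v (fderiv ℝ (drift n Φ) z w) = 0 := by
  rw [fderiv_drift ha, fderiv_drift ha, symp_apply, symp_apply]
  set g := fun k => deriv (deriv Φ) (z.1 k - z.1 (k + 1)) with hg
  have h1 := sum_cyclic (n := n) (fun k => g k * (v.1 k - v.1 (k + 1))) w.1
  have h2 := sum_cyclic (n := n) (fun k => g k * (w.1 k - w.1 (k + 1))) v.1
  simp only [hg, sub_add_cancel] at h1 h2
  have h3 : ∑ k, deriv (deriv Φ) (z.1 k - z.1 (k + 1)) * (w.1 k - w.1 (k + 1)) *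
      (v.1 k - v.1 (k + 1)) = ∑ k, deriv (deriv Φ) (z.1 k - z.1 (k + 1)) * (v.1 k - v.1 (k + 1)) *
      (w.1 k - w.1 (k + 1)) := by congr 1; ext k; ring
  rw [h3, ← h1] at h2
  simp only [Finset.sum_sub_distrib, mul_comm] at h2 ⊢
  linarith

/-- The free flow is symplectic. -/
lemma symp_fderiv_flow (ha : Admissible Φ) (h : IsFlow (drift n Φ) ψ) {t : ℝ}
    (ht : t ∈ Icc (0:ℝ) 1) (z v w : State n) :
    symp n (fderiv ℝ (ψ t) z v) (fderiv ℝ (ψ t) z w) = symp n v w := by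
  have hd := fun s hs => h.hasDerivWithinAt_fderiv (contDiff_drift ha) z s hs
  have hv : ∀ v : State n, ∀ s ∈ Icc (0:ℝ) 1, HasDerivWithinAt (fun s => fderiv ℝ (ψ s) z v)
      (fderiv ℝ (drift n Φ) (ψ s z) (fderiv ℝ (ψ s) z v)) (Icc 0 1) s := fun v s hs => by
    simpa using (hd s hs).clm_apply (hasDerivWithinAt_const s (Icc 0 1) v)
  let B : State n →L[ℝ] State n →L[ℝ] ℝ := LinearMap.toContinuousBilinearMap (symp n)
  have hB : ∀ s ∈ Icc (0:ℝ) 1, HasDerivWithinAt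
      (fun s => B (fderiv ℝ (ψ s) z v) (fderiv ℝ (ψ s) z w)) 0 (Icc 0 1) s := fun s hs => by
    have h1 := (B.hasFDerivAt.comp_hasDerivWithinAt s (hv v s hs)).clm_apply (hv w s hs)
    refine h1.congr_deriv ?_
    exact symp_fderiv_drift ha _ _ _
  have := (convex_Icc (0:ℝ) 1).norm_image_sub_le_of_norm_hasDerivWithin_le (C := 0) hB (by simp)
    (left_mem_Icc.mpr zero_le_one) ht
  rw [zero_mul] at this
  have := sub_eq_zero.mp (norm_le_zero_iff.mp this)
  simp only [h.fderiv_zero] at this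
  exact this

/-- Passage to the centre-of-mass frame at time `t`. -/
def comShift (n : ℕ) [NeZero n] (t : ℝ) : State n →L[ℝ] State n :=
  LinearMap.toContinuousLinearMap
    { toFun := fun z => (fun k => z.1 k - t * ((∑ j, z.2 j) / n), z.2)
      map_add' := fun z w => by ext k <;> simp [Finset.sum_add_distrib]; ring
      map_smul' := fun c z => by ext k <;> simp [← Finset.mul_sum]; ring }

lemma comShift_apply (t : ℝ) (z : State n) :
    comShift n t z = (fun k => z.1 k - t * ((∑ j, z.2 j) / n), z.2) := rfl

lemma symp_comShift (t : ℝ) (v w : State n) :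
    symp n (comShift n t v) (comShift n t w) = symp n v w := by
  simp only [symp_apply, comShift_apply, sub_mul, mul_sub, Finset.sum_sub_distrib,
    ← Finset.mul_sum, ← Finset.sum_mul]
  ring

/-- The motion in the centre-of-mass frame. -/
def chi (ψ : ℝ → State n → State n) (t : ℝ) (z : State n) : State n := comShift n t (ψ t z)

instance : (volume : Measure (State n)).IsAddHaarMeasure :=
  Measure.prod.instIsAddHaarMeasure (volume : Measure (Fin n → ℝ)) (volume : Measure (Fin n → ℝ))

/-- Liouville's theorem for the motion in the centre-of-mass frame. -/
lemma volume_image_chi (ha : Admissible Φ) (h : IsFlow (drift n Φ) ψ) {t : ℝ}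
    (ht : t ∈ Icc (0:ℝ) 1) {s : Set (State n)} (hs : MeasurableSet s) :
    volume (chi ψ t '' s) = volume s := by
  have hd : ∀ z, HasFDerivAt (chi ψ t) ((comShift n t).comp (fderiv ℝ (ψ t) z)) z := fun z =>
    (comShift n t).hasFDerivAt.comp z
      ((h.contDiff_time (contDiff_drift ha) t).differentiable one_ne_zero z).hasFDerivAt
  have hinj : Function.Injective (chi ψ t) := by
    have h1 : Function.Injective (comShift n t) := by
      rw [injective_iff_map_eq_zero]
      intro z hz
      rw [comShift_apply] at hz
      have h2 : z.2 = 0 := congrArg Prod.snd hz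
      have h3 := congrArg Prod.fst hz
      rw [h2] at h3
      ext k
      · simpa using congrFun h3 k
      · simp [h2]
    exact h1.comp (Function.LeftInverse.injective (h.neg_cancel (contDiff_drift ha) t))
  have := lintegral_abs_det_fderiv_eq_addHaar_image volume hs
    (fun z _ => (hd z).hasFDerivWithinAt) hinj.injOn
  rw [← this]
  have hdet : ∀ z, |((comShift n t).comp (fderiv ℝ (ψ t) z)).det| = 1 := fun z =>
    abs_det_of_symp _ fun v w => by
      simp only [ContinuousLinearMap.coe_coe, ContinuousLinearMap.comp_apply]
      rw [symp_comShift, symp_fderiv_flow ha h ht]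
  simp [hdet]

end DriftFlow

/-! ### Genericity and the driving fields -/

section Genericity

variable {Φ : ℝ → ℝ}

/-- Genericity as it is used: `Φ''` and its reflections are linearly independent up to
translation. -/
lemma Generic.eq_zero (hg : Generic Φ) {c₁ c₂ a b : ℝ}
    (h : ∀ s, c₁ * deriv (deriv Φ) (a + s) + c₂ * deriv (deriv Φ) (b - s) = 0) :
    c₁ = 0 ∧ c₂ = 0 := by
  set g := deriv (deriv Φ) with hgdef
  have hne : ¬ ∀ y, g y = 0 := fun h0 => (hg 0).1 fun t => by
    rw [← hgdef, h0, h0]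
  have h1 : c₁ ≠ 0 ∨ c₂ = 0 := by
    by_contra! hc
    apply hne
    intro y
    have := h (b - y)
    rw [hc.1, zero_mul, zero_add, sub_sub_cancel] at this
    exact (mul_eq_zero.mp this).resolve_left hc.2
  rcases eq_or_ne c₁ 0 with hc1 | hc1
  · exact ⟨hc1, h1.resolve_left (not_not.mpr hc1)⟩
  exfalso
  -- The relation reads `g (m + s) = κ * g (m - s)` with `m` the midpoint of `a` and `b`.
  set m := (a + b) / 2 with hm
  set κ := -c₂ / c₁ with hκ
  have h2 : ∀ s, g (m + s) = κ * g (m - s) := fun s => by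
    have := h ((b - a) / 2 + s)
    rw [show a + ((b - a) / 2 + s) = m + s by rw [hm]; ring,
      show b - ((b - a) / 2 + s) = m - s by rw [hm]; ring] at this
    rw [hκ]
    field_simp
    linarith
  have h3 : ∀ s, (κ ^ 2 - 1) * g (m + s) = 0 := fun s => by
    have e1 := h2 s
    have e2 := h2 (-s)
    rw [← sub_eq_add_neg, sub_neg_eq_add] at e2
    rw [e2] at e1
    linear_combination -e1
  have hk : κ ^ 2 - 1 = 0 := by
    by_contra hk
    apply hne
    intro y
    have := (mul_eq_zero.mp (h3 (y - m))).resolve_left hk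
    rwa [add_sub_cancel] at this
  have hk' : (κ - 1) * (κ + 1) = 0 := by linear_combination hk
  rcases mul_eq_zero.mp hk' with hk' | hk'
  · refine (hg m).1 fun t => ?_
    rw [← hgdef, h2, show κ = 1 by linarith, one_mul]
  · refine (hg m).2 fun t => ?_
    rw [← hgdef, h2, show κ = -1 by linarith, neg_one_mul]

lemma Generic.exists_ne (hg : Generic Φ) : ∃ y, deriv (deriv Φ) y ≠ 0 := by
  by_contra! h
  exact (hg 0).1 fun t => by rw [h, h]

/-- The zeros of `Φ''` are isolated. -/
lemma Generic.eventually_ne (hg : Generic Φ) (ha : Admissible Φ) (y : ℝ) :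
    ∀ᶠ s in 𝓝[≠] y, deriv (deriv Φ) s ≠ 0 := by
  rcases (ha.analytic_deriv2 y).eventually_eq_zero_or_eventually_ne_zero with h | h
  · obtain ⟨s, hs⟩ := hg.exists_ne
    exact absurd (AnalyticOnNhd.eqOn_zero_of_preconnected_of_eventuallyEq_zero
      (fun x _ => ha.analytic_deriv2 x) isPreconnected_univ (mem_univ y) h (mem_univ s)) hs
  · exact h

/-- Infinitesimal version of `Generic.eq_zero`. -/
lemma Generic.eq_zero_of_iteratedDeriv (hg : Generic Φ) (ha : Admissible Φ) {c₁ c₂ a b : ℝ}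
    (h : ∀ i, c₁ * iteratedDeriv i (deriv (deriv Φ)) a +
      c₂ * ((-1) ^ i * iteratedDeriv i (deriv (deriv Φ)) b) = 0) :
    c₁ = 0 ∧ c₂ = 0 := by
  set g := deriv (deriv Φ)
  have h1 : ∀ s, AnalyticAt ℝ (fun s => g (a + s)) s := fun s =>
    (ha.analytic_deriv2 (a + s)).fun_comp (analyticAt_const.add analyticAt_id)
  have h2 : ∀ s, AnalyticAt ℝ (fun s => g (b - s)) s := fun s =>
    (ha.analytic_deriv2 (b - s)).fun_comp (analyticAt_const.sub analyticAt_id)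
  have hF : ∀ s, AnalyticAt ℝ (fun s => c₁ * g (a + s) + c₂ * g (b - s)) s := fun s =>
    (analyticAt_const.mul (h1 s)).add (analyticAt_const.mul (h2 s))
  have hd : ∀ i, iteratedDeriv i (fun s => c₁ * g (a + s) + c₂ * g (b - s)) 0 = 0 := fun i => by
    have e : (fun s => c₁ * g (a + s) + c₂ * g (b - s)) =
      (fun s => c₁ * g (a + s)) + fun s => c₂ * g (b - s) := rfl
    rw [e, iteratedDeriv_add (contDiffAt_const.mul (h1 0).contDiffAt)
      (contDiffAt_const.mul (h2 0).contDiffAt), iteratedDeriv_const_mul_field,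
      iteratedDeriv_const_mul_field, iteratedDeriv_comp_const_add, iteratedDeriv_comp_const_sub]
    simpa using h i
  have h0 : analyticOrderAt (fun s => c₁ * g (a + s) + c₂ * g (b - s)) 0 = ⊤ :=
    ENat.eq_top_iff_forall_ge.mpr fun m =>
      (natCast_le_analyticOrderAt_iff_iteratedDeriv_eq_zero (hF 0)).mpr fun i _ => hd i
  rw [analyticOrderAt_eq_top] at h0
  refine hg.eq_zero (a := a) (b := b) fun s => ?_
  exact AnalyticOnNhd.eqOn_zero_of_preconnected_of_eventuallyEq_zero
    (fun x _ => hF x) isPreconnected_univ (mem_univ 0) h0 (mem_univ s)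

end Genericity

section Control

variable {n : ℕ} [NeZero n] {Φ : ℝ → ℝ} {ψ : ℝ → State n → State n}

/-- The drift conjugated by the translation by `u • e` in the `p₁`-direction. -/
def driftU (n : ℕ) [NeZero n] (Φ : ℝ → ℝ) (u : ℝ) (z : State n) : State n :=
  drift n Φ z + u • eq' n 0

/-- The flow conjugated by the translation by `u • e` in the `p₁`-direction. -/
def flowU (ψ : ℝ → State n → State n) (u t : ℝ) (z : State n) : State n :=
  ψ t (z + u • ep n 0) - u • ep n 0

lemma drift_add_ep (u : ℝ) (z : State n) : drift n Φ (z + u • ep n 0) = driftU n Φ u z := by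
  ext k <;> simp [drift, driftU, ep, eq']

lemma contDiff_driftU (ha : Admissible Φ) (u : ℝ) {m : WithTop ℕ∞} :
    ContDiff ℝ m (driftU n Φ u) := (contDiff_drift ha).add contDiff_const

lemma fderiv_driftU (u : ℝ) (z : State n) :
    fderiv ℝ (driftU n Φ u) z = fderiv ℝ (drift n Φ) z := by
  unfold driftU; rw [fderiv_add_const]

lemma IsFlow.flowU (h : IsFlow (drift n Φ) ψ) (u : ℝ) : IsFlow (driftU n Φ u) (flowU ψ u) where
  zero z := by simp [_root_.flowU, h.zero]
  deriv z t := by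
    rw [← drift_add_ep, _root_.flowU, sub_add_cancel]
    exact (h.deriv (z + u • ep n 0) t).sub_const _
  bdd r T := by
    obtain ⟨R, hR⟩ := h.bdd (r + ‖u • ep n 0‖) T
    refine ⟨R + ‖u • ep n 0‖, fun z hz t ht => ?_⟩
    rw [mem_closedBall_zero_iff] at hz ⊢
    refine (norm_sub_le _ _).trans ?_
    gcongr
    refine mem_closedBall_zero_iff.mp (hR _ (mem_closedBall_zero_iff.mpr ?_) t ht)
    exact (norm_add_le _ _).trans (by gcongr)

/-- One admissible move: a conjugated flow, followed for a nonnegative time. -/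
def Move (ψ : ℝ → State n → State n) (z z' : State n) : Prop :=
  ∃ u ∈ ({-1, 0, 1} : Set ℝ), ∃ t : ℝ, 0 ≤ t ∧ z' = flowU ψ u t z

/-- Attainability by finitely many admissible moves. -/
def Reach (ψ : ℝ → State n → State n) : State n → State n → Prop :=
  Relation.ReflTransGen (Move ψ)

lemma sum_flowU (h : IsFlow (drift n Φ) ψ) (u t : ℝ) (z : State n) :
    ∑ k, (flowU ψ u t z).2 k = ∑ k, z.2 k := by
  have := sum_flow_snd h t (z + u • ep n 0)
  simp only [flowU, Prod.snd_sub, Pi.sub_apply, Finset.sum_sub_distrib, this]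
  simp [Finset.sum_add_distrib]

lemma Reach.sum_eq (h : IsFlow (drift n Φ) ψ) {x y : State n} (hr : Reach ψ x y) :
    ∑ k, y.2 k = ∑ k, x.2 k := by
  induction hr with
  | refl => rfl
  | tail _ hm ih =>
    obtain ⟨u, -, t, -, rfl⟩ := hm
    rw [sum_flowU h, ih]

lemma Reach.flowU {x y : State n} (hr : Reach ψ x y) {u : ℝ} (hu : u ∈ ({-1, 0, 1} : Set ℝ))
    {t : ℝ} (ht : 0 ≤ t) : Reach ψ x (flowU ψ u t y) :=
  Relation.ReflTransGen.tail hr ⟨u, hu, t, ht, rfl⟩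

lemma rev_flowU (ha : Admissible Φ) (h : IsFlow (drift n Φ) ψ) (u t : ℝ) (z : State n) :
    rev (flowU ψ u t z) = flowU ψ (-u) (-t) (rev z) := by
  have e : rev z + (-u) • ep n 0 = rev (z + u • ep n 0) := by ext k <;> simp [rev, ep]; ring
  rw [flowU, flowU, e, flow_rev ha h, neg_neg]
  ext k <;> simp [rev, ep]; ring

/-- Attainability is reversed by the reversal of momenta. -/
lemma Reach.rev (ha : Admissible Φ) (h : IsFlow (drift n Φ) ψ) {x y : State n}
    (hr : Reach ψ x y) : Reach ψ (rev y) (rev x) := by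
  induction hr with
  | refl => exact Relation.ReflTransGen.refl
  | tail _ hm ih =>
    obtain ⟨u, hu, t, ht, rfl⟩ := hm
    refine Relation.ReflTransGen.head ⟨-u, ?_, t, ht, ?_⟩ ih
    · rcases hu with rfl | rfl | rfl <;> simp
    · rw [rev_flowU ha h, (h.flowU (-u)).cancel_neg (contDiff_driftU ha _)]

end Control

/-! ### Attainable immersed families -/

/-- Solving `M s a = v s` inside a closed subspace, with `M s → id`, the limit of `v` stays in the
subspace. -/
lemma mem_of_tendsto_clm {E : Type*} [NormedAddCommGroup E] [NormedSpace ℝ E] {l : Filter ℝ}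
    [NeBot l] {M : ℝ → E →L[ℝ] E} {v : ℝ → E} {v0 : E} {L : Submodule ℝ E}
    (hL : IsClosed (L : Set E)) (hM : Tendsto M l (𝓝 (ContinuousLinearMap.id ℝ E)))
    (hv : Tendsto v l (𝓝 v0)) (h : ∀ᶠ s in l, ∃ a ∈ L, M s a = v s) : v0 ∈ L := by
  have h' : ∀ s, ∃ a : E, (∃ a ∈ L, M s a = v s) → a ∈ L ∧ M s a = v s := fun s => by
    by_cases hs : ∃ a ∈ L, M s a = v s
    · obtain ⟨a, h1, h2⟩ := hs; exact ⟨a, fun _ => ⟨h1, h2⟩⟩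
    · exact ⟨0, fun hh => absurd hh hs⟩
  choose a ha using h'
  have hN : Tendsto (fun s => ‖ContinuousLinearMap.id ℝ E - M s‖) l (𝓝 0) := by
    have := (tendsto_const_nhds (x := ContinuousLinearMap.id ℝ E)).sub hM
    rw [sub_self] at this
    simpa using this.norm
  have hd : Tendsto (fun s => a s - v s) l (𝓝 0) := by
    have h0 : Tendsto (fun s => 2 * ‖ContinuousLinearMap.id ℝ E - M s‖ * ‖v s‖) l (𝓝 0) := by
      have := (hN.const_mul 2).mul hv.norm
      simpa using this
    refine squeeze_zero_norm' ?_ h0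
    filter_upwards [h, hN.eventually (eventually_lt_nhds (by norm_num : (0:ℝ) < 1/2))] with s h1 h2
    have h3 := (ha s h1).2
    have h4 : a s - v s = (ContinuousLinearMap.id ℝ E - M s) (a s) := by simp [h3]
    have h5 : ‖a s - v s‖ ≤ ‖ContinuousLinearMap.id ℝ E - M s‖ * ‖a s‖ := by
      rw [h4]; exact ContinuousLinearMap.le_opNorm _ _
    have h6 : ‖a s‖ ≤ ‖v s‖ + ‖a s - v s‖ := by
      have := norm_add_le (v s) (a s - v s); simpa using this
    have h7 : ‖a s‖ ≤ 2 * ‖v s‖ := by nlinarith [norm_nonneg (a s)]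
    nlinarith [norm_nonneg (ContinuousLinearMap.id ℝ E - M s)]
  have hlim : Tendsto a l (𝓝 v0) := by simpa using hd.add hv
  exact hL.mem_of_tendsto hlim (h.mono fun s hs => (ha s hs).1)

/-- If the values of `X` along an orbit of `Y`, transported back to `z` by the flow, lie in the
closed subspace `L`, then so does the bracket of `X` and `Y` at `z`: it is the derivative at time `0`
of the transported vector. -/
lemma IsFlow.bracket_mem {E : Type*} [NormedAddCommGroup E] [NormedSpace ℝ E]
    [FiniteDimensional ℝ E] {Y : E → E} {ψ : ℝ → E → E} (h : IsFlow Y ψ)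
    (hY : ContDiff ℝ 2 Y) {X : E → E} (hX : Differentiable ℝ X) {z : E} {L : Submodule ℝ E}
    (hL : IsClosed (L : Set E)) (h0 : X z ∈ L)
    (hs : ∀ s > 0, ∃ a ∈ L, fderiv ℝ (ψ s) z a = X (ψ s z)) :
    fderiv ℝ X z (Y z) - fderiv ℝ Y z (X z) ∈ L := by
  set M := fun s => fderiv ℝ (ψ s) z with hM
  have hM0 : M 0 = ContinuousLinearMap.id ℝ _ := h.fderiv_zero z
  have hMd : HasDerivWithinAt M (fderiv ℝ Y z) (Icc 0 1) 0 := by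
    have hMd := h.hasDerivWithinAt_fderiv hY z 0 (by simp)
    rw [h.fderiv_zero, h.zero, ContinuousLinearMap.comp_id] at hMd
    exact hMd
  have hv : HasDerivWithinAt (fun s => X (ψ s z) - M s (X z))
      (fderiv ℝ X z (Y z) - fderiv ℝ Y z (X z)) (Icc 0 1) 0 := by
    have h1 := (h.deriv z 0).hasDerivWithinAt (s := Icc 0 1)
    rw [h.zero] at h1
    have h2 : HasFDerivAt X (fderiv ℝ X z) (ψ 0 z) := by
      rw [h.zero]; exact (hX z).hasFDerivAt
    have h3 := hMd.clm_apply (hasDerivWithinAt_const (0:ℝ) (Icc 0 1) (X z))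
    simp only [map_zero, add_zero] at h3
    exact (h2.comp_hasDerivWithinAt 0 h1).fun_sub h3
  have hIoc : 𝓝[Icc (0:ℝ) 1 \ {0}] (0:ℝ) = 𝓝[>] 0 := by
    rw [Icc_sdiff_left, nhdsWithin_Ioc_eq_nhdsGT one_pos]
  rw [hasDerivWithinAt_iff_tendsto_slope, hIoc] at hv
  have hMc : Tendsto M (𝓝[>] 0) (𝓝 (ContinuousLinearMap.id ℝ _)) := by
    have h1 : Tendsto M (𝓝[Icc 0 1] 0) (𝓝 (M 0)) := hMd.continuousWithinAt
    rw [hM0] at h1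
    have h2 : 𝓝[>] (0:ℝ) ≤ 𝓝[Icc 0 1] 0 :=
      nhdsWithin_le_iff.mpr (Icc_mem_nhdsGT (zero_lt_one' ℝ))
    exact h1.mono_left h2
  refine mem_of_tendsto_clm hL hMc hv ?_
  filter_upwards [self_mem_nhdsWithin] with s hs0
  obtain ⟨a, haL, hb⟩ := hs s hs0
  refine ⟨s⁻¹ • (a - X z), L.smul_mem _ (L.sub_mem haL h0), ?_⟩
  rw [slope_def_module, h.zero, hM0]
  simp only [ContinuousLinearMap.id_apply, sub_self, sub_zero]
  rw [← hb, ← map_sub, ← map_smul]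

section Immersions

variable {n : ℕ} [NeZero n] {Φ : ℝ → ℝ} {ψ : ℝ → State n → State n} {x : State n} {k : ℕ}

/-- `F` is immersive at `w` and takes near `w` values that are attainable from `x`. -/
structure Imm (ψ : ℝ → State n → State n) (x : State n) (F : (Fin k → ℝ) → State n)
    (w : Fin k → ℝ) : Prop where
  contDiff : ContDiff ℝ 1 F
  reach : ∀ᶠ t in 𝓝 w, Reach ψ x (F t)
  inj : Function.Injective (fderiv ℝ F w)

/-- The image of the differential of `F` at `w`. -/
def tgt (F : (Fin k → ℝ) → State n) (w : Fin k → ℝ) : Submodule ℝ (State n) :=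
  LinearMap.range (fderiv ℝ F w : (Fin k → ℝ) →ₗ[ℝ] State n)

lemma mem_tgt {F : (Fin k → ℝ) → State n} {w : Fin k → ℝ} {v : State n} :
    v ∈ tgt F w ↔ ∃ a, fderiv ℝ F w a = v := Iff.rfl

lemma Imm.eventually {F : (Fin k → ℝ) → State n} {w : Fin k → ℝ} (h : Imm ψ x F w) :
    ∀ᶠ w' in 𝓝 w, Imm ψ x F w' := by
  have h1 := (h.contDiff.continuous_fderiv one_ne_zero).continuousAt.eventually
    (ContinuousLinearMap.isOpen_injective.mem_nhds h.inj)
  filter_upwards [h1, eventually_eventually_nhds.mpr h.reach] with w' h1 h2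
  exact ⟨h.contDiff, h2, h1⟩

lemma fderiv_flowU_injective (ha : Admissible Φ) (h : IsFlow (drift n Φ) ψ) (u s : ℝ)
    (z : State n) : Function.Injective (fderiv ℝ (flowU ψ u s) z) := by
  have hd := fun s z => ((h.flowU u).contDiff_time (contDiff_driftU ha u) s).differentiable
    one_ne_zero z
  have h1 : (flowU ψ u (-s)) ∘ (flowU ψ u s) = id :=
    funext fun z => (h.flowU u).neg_cancel (contDiff_driftU ha u) s z
  have h2 := fderiv_comp z (hd (-s) (flowU ψ u s z)) (hd s z)
  rw [h1, fderiv_id] at h2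
  refine Function.LeftInverse.injective (g := fderiv ℝ (flowU ψ u (-s)) (flowU ψ u s z))
    fun v => ?_
  have := congrArg (fun L => L v) h2
  simpa using this.symm

lemma fderiv_flowU_comp (ha : Admissible Φ) (h : IsFlow (drift n Φ) ψ) (u s : ℝ)
    {F : (Fin k → ℝ) → State n} (hF : ContDiff ℝ 1 F) (w : Fin k → ℝ) :
    fderiv ℝ (fun t => flowU ψ u s (F t)) w =
      (fderiv ℝ (flowU ψ u s) (F w)).comp (fderiv ℝ F w) :=
  fderiv_comp w (((h.flowU u).contDiff_time (contDiff_driftU ha u) s).differentiable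
    one_ne_zero (F w)) (hF.differentiable one_ne_zero w)

/-- Attainable families are transported by the admissible moves. -/
lemma Imm.push (ha : Admissible Φ) (h : IsFlow (drift n Φ) ψ) {F : (Fin k → ℝ) → State n}
    {w : Fin k → ℝ} (hF : Imm ψ x F w) {u : ℝ} (hu : u ∈ ({-1, 0, 1} : Set ℝ)) {s : ℝ}
    (hs : 0 ≤ s) : Imm ψ x (fun t => flowU ψ u s (F t)) w where
  contDiff := ((h.flowU u).contDiff_time (contDiff_driftU ha u) s).comp hF.contDiff
  reach := hF.reach.mono fun t ht => ht.flowU hu hs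
  inj := by
    rw [fderiv_flowU_comp ha h u s hF.contDiff]
    exact (fderiv_flowU_injective ha h u s _).comp hF.inj

/-- Adding one time parameter raises the dimension when the field is transverse. -/
lemma Imm.append (ha : Admissible Φ) (h : IsFlow (drift n Φ) ψ) {F : (Fin k → ℝ) → State n}
    {w : Fin k → ℝ} (hF : Imm ψ x F w) {u : ℝ} (hu : u ∈ ({-1, 0, 1} : Set ℝ))
    (hn : driftU n Φ u (F w) ∉ tgt F w) :
    ∃ (F' : (Fin (k + 1) → ℝ) → State n) (w' : Fin (k + 1) → ℝ), Imm ψ x F' w' := by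
  set G : (Fin k → ℝ) × ℝ → State n := fun p => flowU ψ u p.2 (F p.1) with hG
  have hGc : ContDiff ℝ 1 G := ((h.flowU u).contDiff (contDiff_driftU ha u)).comp
    (contDiff_snd.prodMk (hF.contDiff.comp contDiff_fst))
  have hGd := fun p => (hGc.differentiable one_ne_zero p).hasFDerivAt
  have hinj : Function.Injective (fderiv ℝ G (w, 0)) := by
    rw [injective_iff_map_eq_zero]
    rintro ⟨a, b⟩ hab
    have e1 : fderiv ℝ G (w, 0) (a, 0) = fderiv ℝ F w a := by
      have h1 := (hGd (w, 0)).comp w (hasFDerivAt_prodMk_left (𝕜 := ℝ) w (0:ℝ))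
      have h2 : G ∘ (fun e => (e, (0:ℝ))) = F := funext fun t => (h.flowU u).zero _
      rw [h2] at h1
      rw [h1.fderiv]; simp
    have e2 : fderiv ℝ G (w, 0) (0, 1) = driftU n Φ u (F w) := by
      have h1 := (hGd (w, 0)).comp_hasDerivAt (0:ℝ)
        ((hasDerivAt_const (0:ℝ) w).prodMk (hasDerivAt_id (0:ℝ)))
      have h2 := (h.flowU u).deriv (F w) 0
      rw [(h.flowU u).zero] at h2
      exact h1.unique h2
    have e3 : ((a, b) : (Fin k → ℝ) × ℝ) = (a, 0) + b • (0, 1) := by simp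
    rw [e3, map_add, map_smul, e1, e2] at hab
    have hb : b = 0 := by
      by_contra hb
      refine hn (mem_tgt.mpr ⟨-(b⁻¹ • a), ?_⟩)
      rw [map_neg, map_smul, eq_neg_of_add_eq_zero_left hab, smul_neg, neg_neg, smul_smul,
        inv_mul_cancel₀ hb, one_smul]
    subst hb
    rw [zero_smul, add_zero] at hab
    rw [hF.inj (hab.trans (map_zero _).symm)]
    rfl
  have h1 : ∀ᶠ s in 𝓝[>] (0:ℝ), Function.Injective (fderiv ℝ G (w, s)) := by
    have hc : Continuous (fun s : ℝ => fderiv ℝ G (w, s)) :=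
      (hGc.continuous_fderiv one_ne_zero).comp (by fun_prop)
    exact (hc.continuousAt.eventually
      (ContinuousLinearMap.isOpen_injective.mem_nhds hinj)).filter_mono nhdsWithin_le_nhds
  obtain ⟨s, hs1, hs0⟩ := (h1.and self_mem_nhdsWithin).exists
  have hs0 : 0 < s := hs0
  let e : (Fin (k + 1) → ℝ) ≃L[ℝ] (Fin k → ℝ) × ℝ := ContinuousLinearEquiv.ofFinrankEq (by simp)
  refine ⟨G ∘ e, e.symm (w, s), hGc.comp e.contDiff, ?_, ?_⟩
  · have hc : Tendsto e (𝓝 (e.symm (w, s))) (𝓝 (w, s)) := by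
      simpa using e.continuous.tendsto (e.symm (w, s))
    refine hc.eventually (p := fun p => Reach ψ x (G p)) ?_
    rw [nhds_prod_eq]
    filter_upwards [hF.reach.prod_mk (eventually_gt_nhds hs0)] with p hp
    exact hp.1.flowU hu hp.2.le
  · rw [fderiv_comp _ (hGd _).differentiableAt e.differentiableAt, e.fderiv]
    simp only [ContinuousLinearEquiv.apply_symm_apply]
    exact hs1.comp e.injective

/-- `X` is tangent to all `k`-parameter families attainable from `x`. -/
def Tan (ψ : ℝ → State n → State n) (x : State n) (k : ℕ) (X : State n → State n) : Prop :=
  ∀ (F : (Fin k → ℝ) → State n) (w : Fin k → ℝ), Imm ψ x F w → X (F w) ∈ tgt F w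

/-- Tangency is inherited by the bracket with the driving fields. -/
lemma Tan.bracket (ha : Admissible Φ) (h : IsFlow (drift n Φ) ψ) {X : State n → State n}
    (hX : Tan ψ x k X) (hXd : Differentiable ℝ X) {u : ℝ} (hu : u ∈ ({-1, 0, 1} : Set ℝ)) :
    Tan ψ x k (fun z => fderiv ℝ X z (driftU n Φ u z) - fderiv ℝ (drift n Φ) z (X z)) := by
  intro F w hF
  have := IsFlow.bracket_mem (h.flowU u) (contDiff_driftU ha u) hXd
    (Submodule.closed_of_finiteDimensional (tgt F w)) (hX F w hF) fun s hs => by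
      obtain ⟨b, hb⟩ := mem_tgt.mp (hX _ w (hF.push ha h hu hs.le))
      rw [fderiv_flowU_comp ha h u s hF.contDiff] at hb
      exact ⟨_, mem_tgt.mpr ⟨b, rfl⟩, hb⟩
  rwa [fderiv_driftU] at this

end Immersions

/-! ### Brackets of the driving fields -/

section Cyclic

variable {n : ℕ} [NeZero n] {Φ : ℝ → ℝ}

lemma fin_cyclic {P : Fin n → Prop} (h0 : P 0) (hs : ∀ j, P j → P (j + 1)) : ∀ j, P j := by
  have hm : ∀ m : ℕ, P (Fin.ofNat n m) := by
    intro m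
    induction m with
    | zero => exact h0
    | succ m ih =>
      have : Fin.ofNat n (m + 1) = Fin.ofNat n m + 1 := by
        ext; simp [Fin.val_add]
      rw [this]; exact hs _ ih
  intro j
  simpa using hm j.val

lemma fin_add_one_ne (hn : 3 ≤ n) (j : Fin n) : j + 1 ≠ j := by
  intro h
  have h1 : (1 : Fin n) = 0 := by simpa using h
  have h2 := congrArg Fin.val h1
  rw [Fin.val_one', Fin.val_zero, Nat.mod_eq_of_lt (by omega)] at h2
  omega

lemma fin_sub_one_ne (hn : 3 ≤ n) (j : Fin n) : j - 1 ≠ j := fun h =>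
  fin_add_one_ne hn (j - 1) (by rw [sub_add_cancel]; exact h.symm)

lemma fderiv_drift_ep (ha : Admissible Φ) (z : State n) (j : Fin n) :
    fderiv ℝ (drift n Φ) z (ep n j) = eq' n j := by
  rw [fderiv_drift ha]
  ext k <;> simp [ep, eq']

/-- The second component of the differential of the drift in the direction `∂/∂q_j`, with `c k`
standing for `Φ''(q_k - q_{k+1})`. -/
lemma single_shift (c : Fin n → ℝ) (j : Fin n) :
    ((fun k => c (k - 1) * ((Pi.single j 1 : Fin n → ℝ) (k - 1) - (Pi.single j 1 : Fin n → ℝ) k) -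
      c k * ((Pi.single j 1 : Fin n → ℝ) k - (Pi.single j 1 : Fin n → ℝ) (k + 1))) :
        Fin n → ℝ) =
    c j • (Pi.single (j + 1) 1 - Pi.single j 1) +
      c (j - 1) • (Pi.single (j - 1) 1 - Pi.single j 1) := by
  funext k
  simp only [Pi.add_apply, Pi.smul_apply, Pi.sub_apply, smul_eq_mul]
  have e1 : (Pi.single j 1 : Fin n → ℝ) (k - 1) = (Pi.single (j + 1) 1 : Fin n → ℝ) k := by
    simp only [Pi.single_apply, sub_eq_iff_eq_add]
  have e2 : (Pi.single j 1 : Fin n → ℝ) (k + 1) = (Pi.single (j - 1) 1 : Fin n → ℝ) k := by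
    simp only [Pi.single_apply, eq_sub_iff_add_eq]
  rw [e1, e2]
  have f1 : c (k - 1) * (Pi.single (j + 1) 1 : Fin n → ℝ) k =
      c j * (Pi.single (j + 1) 1 : Fin n → ℝ) k := by
    by_cases h : k = j + 1
    · subst h; simp
    · simp [h]
  have f2 : c k * (Pi.single (j - 1) 1 : Fin n → ℝ) k =
      c (j - 1) * (Pi.single (j - 1) 1 : Fin n → ℝ) k := by
    by_cases h : k = j - 1
    · subst h; simp
    · simp [h]
  have f3 : c k * (Pi.single j 1 : Fin n → ℝ) k = c j * (Pi.single j 1 : Fin n → ℝ) k := by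
    by_cases h : k = j
    · subst h; simp
    · simp [h]
  have f4 : c (k - 1) * (Pi.single j 1 : Fin n → ℝ) k =
      c (j - 1) * (Pi.single j 1 : Fin n → ℝ) k := by
    by_cases h : k = j
    · subst h; simp
    · simp [h]
  linear_combination f1 + f2 - f3 - f4

lemma fderiv_drift_eq' (ha : Admissible Φ) (z : State n) (j : Fin n) :
    fderiv ℝ (drift n Φ) z (eq' n j) =
      deriv (deriv Φ) (z.1 j - z.1 (j + 1)) • (ep n (j + 1) - ep n j) +
      deriv (deriv Φ) (z.1 (j - 1) - z.1 j) • (ep n (j - 1) - ep n j) := by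
  rw [fderiv_drift ha]
  have := single_shift (fun k => deriv (deriv Φ) (z.1 k - z.1 (k + 1))) j
  simp only [sub_add_cancel] at this
  refine Prod.ext ?_ ?_
  · ext k; simp [ep, eq']
  · simp only [eq', this]; rfl

end Cyclic

section Rank

variable {n : ℕ} [NeZero n] {Φ : ℝ → ℝ} {ψ : ℝ → State n → State n} {x : State n} {k : ℕ}

/-- The range of an injective linear map missing a given vector is an open condition on the map. -/
lemma eventually_notMem_range {V W E : Type*} [NormedAddCommGroup V] [NormedSpace ℝ V]
    [FiniteDimensional ℝ V] [TopologicalSpace W] [NormedAddCommGroup E] [NormedSpace ℝ E]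
    {M : W → V →L[ℝ] E} (hM : Continuous M) {w : W} (hi : Function.Injective (M w)) {c : E}
    (hc : ∀ a, M w a ≠ c) : ∀ᶠ w' in 𝓝 w, ∀ a, M w' a ≠ c := by
  set L : W → (V × ℝ →L[ℝ] E) := fun w => (M w).comp (ContinuousLinearMap.fst ℝ V ℝ) +
    (ContinuousLinearMap.toSpanSingleton ℝ c).comp (ContinuousLinearMap.snd ℝ V ℝ) with hL
  have hLc : Continuous L := (hM.clm_comp continuous_const).add continuous_const
  have hLa : ∀ w a b, L w (a, b) = M w a + b • c := fun w a b => by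
    simp [hL, ContinuousLinearMap.toSpanSingleton_apply]
  have hLi : Function.Injective (L w) := by
    rw [injective_iff_map_eq_zero]
    rintro ⟨a, b⟩ hab
    rw [hLa] at hab
    have hb : b = 0 := by
      by_contra hb
      refine hc (-(b⁻¹ • a)) ?_
      rw [map_neg, map_smul, eq_neg_of_add_eq_zero_left hab, smul_neg, neg_neg, smul_smul,
        inv_mul_cancel₀ hb, one_smul]
    subst hb
    rw [zero_smul, add_zero] at hab
    rw [hi (hab.trans (map_zero _).symm)]
    rfl
  filter_upwards [hLc.continuousAt.eventually
    (ContinuousLinearMap.isOpen_injective.mem_nhds hLi)] with w' hw' a ha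
  have h1 : L w' (a, 0) = L w' (0, 1) := by rw [hLa, hLa, ha]; simp
  have h2 := congrArg Prod.snd (hw' h1)
  simp at h2

lemma Tan.add {X Y : State n → State n} (hX : Tan ψ x k X) (hY : Tan ψ x k Y) :
    Tan ψ x k (fun z => X z + Y z) := fun F w h =>
  (tgt F w).add_mem (hX F w h) (hY F w h)

lemma Tan.sub {X Y : State n → State n} (hX : Tan ψ x k X) (hY : Tan ψ x k Y) :
    Tan ψ x k (fun z => X z - Y z) := fun F w h =>
  (tgt F w).sub_mem (hX F w h) (hY F w h)

lemma Tan.smul {X : State n → State n} (hX : Tan ψ x k X) (c : State n → ℝ) :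
    Tan ψ x k (fun z => c z • X z) := fun F w h =>
  (tgt F w).smul_mem _ (hX F w h)

lemma Tan.congr {X Y : State n → State n} (hX : Tan ψ x k X) (hY : ∀ z, X z = Y z) :
    Tan ψ x k Y := fun F w h => hY (F w) ▸ hX F w h

/-- Since the zeros of `Φ''` are isolated, the factor `Φ''(q_j - q_{j+1})` can be removed as soon
as `q_j` varies along the family. -/
lemma Tan.isolate (hn : 3 ≤ n) (ha : Admissible Φ) (hg : Generic Φ) {j : Fin n} {c : State n}
    (hX : Tan ψ x k fun z => deriv (deriv Φ) (z.1 j - z.1 (j + 1)) • c)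
    (hq : Tan ψ x k fun _ => eq' n j) : Tan ψ x k fun _ => c := by
  intro F w hF
  by_contra hc
  have hc' : ∀ a, fderiv ℝ F w a ≠ c := fun a h => hc (mem_tgt.mpr ⟨a, h⟩)
  have h1 := eventually_notMem_range (hF.contDiff.continuous_fderiv one_ne_zero) hF.inj hc'
  have h2 : ∀ᶠ w' in 𝓝 w, deriv (deriv Φ) ((F w').1 j - (F w').1 (j + 1)) = 0 := by
    filter_upwards [h1, hF.eventually] with w' h1 h2
    by_contra h0
    obtain ⟨a, ha⟩ := mem_tgt.mp (hX F w' h2)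
    refine h1 ((deriv (deriv Φ) ((F w').1 j - (F w').1 (j + 1)))⁻¹ • a) ?_
    rw [map_smul, ha, smul_smul, inv_mul_cancel₀ h0, one_smul]
  obtain ⟨a, ha1⟩ := mem_tgt.mp (hq F w hF)
  have ha1 : fderiv ℝ F w a = eq' n j := ha1
  have hl : HasDerivAt (fun s : ℝ => w + s • a) a 0 := by
    simpa using ((hasDerivAt_id (0:ℝ)).smul_const a).const_add w
  have hlc : Tendsto (fun s : ℝ => w + s • a) (𝓝 0) (𝓝 w) := by
    simpa using hl.continuousAt.tendsto
  have hd : HasDerivAt (fun s : ℝ => F (w + s • a)) (eq' n j) 0 := by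
    have h3 : HasFDerivAt F (fderiv ℝ F w) (w + (0:ℝ) • a) := by
      simpa using (hF.contDiff.differentiable one_ne_zero w).hasFDerivAt
    rw [← ha1]
    exact h3.comp_hasDerivAt 0 hl
  have hy : HasDerivAt (fun s : ℝ => (F (w + s • a)).1 j - (F (w + s • a)).1 (j + 1)) 1 0 := by
    have h4 := hasDerivAt_pi.mp hd.prod_fst
    have := (h4 j).fun_sub (h4 (j + 1))
    simpa [eq', fin_add_one_ne hn j] using this
  have h5 := (hy.tendsto_nhdsNE one_ne_zero).eventually (hg.eventually_ne ha _)
  have h6 := (hlc.eventually h2).filter_mono (nhdsWithin_le_nhds (s := {0}ᶜ))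
  obtain ⟨s, hs1, hs2⟩ := (h5.and h6).exists
  exact hs1 hs2

/-- The `i`-th derivative along `q₁` of the bracket of `∂/∂q₁` with the drift, up to sign. -/
def vfield (n : ℕ) [NeZero n] (Φ : ℝ → ℝ) (i : ℕ) (z : State n) : State n :=
  iteratedDeriv i (deriv (deriv Φ)) (z.1 0 - z.1 1) • (ep n 1 - ep n 0) +
    ((-1) ^ i * iteratedDeriv i (deriv (deriv Φ)) (z.1 (-1) - z.1 0)) • (ep n (-1) - ep n 0)

lemma contDiff_iter (ha : Admissible Φ) (i : ℕ) :
    ContDiff ℝ ⊤ (iteratedDeriv i (deriv (deriv Φ))) := by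
  have h : ContDiff ℝ ⊤ (deriv (deriv Φ)) := contDiff_iff_contDiffAt.mpr fun y =>
    (ha.analytic_deriv2 y).contDiffAt
  induction i with
  | zero => simpa using h
  | succ i ih =>
    rw [iteratedDeriv_succ]
    exact (contDiff_iff_contDiffAt.mpr fun y => by
      have := (ih.contDiffAt (x := y)).analyticAt.deriv
      exact this.contDiffAt)

lemma differentiable_vfield (ha : Admissible Φ) (i : ℕ) : Differentiable ℝ (vfield n Φ i) := by
  have h := (contDiff_iter ha i).differentiable (by simp)
  unfold vfield
  fun_prop

lemma fderiv_vfield (hn : 3 ≤ n) (ha : Admissible Φ) (i : ℕ) (z : State n) :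
    fderiv ℝ (vfield n Φ i) z (eq' n 0) = vfield n Φ (i + 1) z := by
  have hg : ∀ y, HasDerivAt (iteratedDeriv i (deriv (deriv Φ)))
      (iteratedDeriv (i + 1) (deriv (deriv Φ)) y) y := fun y => by
    rw [iteratedDeriv_succ]
    exact ((contDiff_iter ha i).differentiable (by simp) y).hasDerivAt
  have hl : HasDerivAt (fun s : ℝ => z + s • eq' n 0) (eq' n 0) 0 := by
    simpa using ((hasDerivAt_id (0:ℝ)).smul_const (eq' n 0)).const_add z
  have h3 : HasFDerivAt (vfield n Φ i) (fderiv ℝ (vfield n Φ i) z) (z + (0:ℝ) • eq' n 0) := by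
    simpa using (differentiable_vfield ha i z).hasFDerivAt
  have h4 := h3.comp_hasDerivAt 0 hl
  have n1 : (1 : Fin n) ≠ 0 := by simpa using fin_add_one_ne hn 0
  have n2 : (-1 : Fin n) ≠ 0 := by simpa using fin_sub_one_ne hn 0
  have e : (vfield n Φ i) ∘ (fun s : ℝ => z + s • eq' n 0) = fun s =>
      iteratedDeriv i (deriv (deriv Φ)) (z.1 0 - z.1 1 + s) • (ep n 1 - ep n 0) +
      ((-1) ^ i * iteratedDeriv i (deriv (deriv Φ)) (z.1 (-1) - z.1 0 - s)) •
        (ep n (-1) - ep n 0) := by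
    funext s
    simp only [Function.comp, vfield, eq', Prod.fst_add, Prod.smul_fst, Pi.add_apply,
      Pi.smul_apply, Pi.single_eq_same, Pi.single_eq_of_ne n1, Pi.single_eq_of_ne n2, smul_eq_mul,
      mul_one, mul_zero, add_zero]
    congr 4 <;> ring
  rw [e] at h4
  have d1 : HasDerivAt (fun s : ℝ => iteratedDeriv i (deriv (deriv Φ)) (z.1 0 - z.1 1 + s))
      (iteratedDeriv (i + 1) (deriv (deriv Φ)) (z.1 0 - z.1 1)) 0 := by
    have := (hg (z.1 0 - z.1 1 + 0)).comp_const_add (z.1 0 - z.1 1) 0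
    simpa using this
  have d2 : HasDerivAt (fun s : ℝ => iteratedDeriv i (deriv (deriv Φ)) (z.1 (-1) - z.1 0 - s))
      (-iteratedDeriv (i + 1) (deriv (deriv Φ)) (z.1 (-1) - z.1 0)) 0 := by
    have := (hg (z.1 (-1) - z.1 0 - 0)).comp_const_sub (z.1 (-1) - z.1 0) 0
    simpa using this
  have h5 := (d1.smul_const (ep n 1 - ep n 0)).fun_add
    ((d2.const_mul ((-1) ^ i)).smul_const (ep n (-1) - ep n 0))
  rw [h4.unique h5, vfield, pow_succ]
  congr 2
  ring

end Rank

/-! ### Interior points of the attainable sets -/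

section Krener

variable {n : ℕ} [NeZero n] {Φ : ℝ → ℝ} {ψ : ℝ → State n → State n} {x : State n} {k : ℕ}

lemma Imm.le_finrank {F : (Fin k → ℝ) → State n} {w : Fin k → ℝ} (h : Imm ψ x F w) :
    k ≤ Module.finrank ℝ (State n) := by
  have := LinearMap.finrank_le_finrank_of_injective
    (f := (fderiv ℝ F w : (Fin k → ℝ) →ₗ[ℝ] State n)) h.inj
  simpa using this

/-- There is a largest dimension of attainable immersed families. -/
lemma exists_max_imm (ψ : ℝ → State n → State n) (x : State n) :
    ∃ k : ℕ, (∃ (F : (Fin k → ℝ) → State n) (w : Fin k → ℝ), Imm ψ x F w) ∧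
      ¬ ∃ (F : (Fin (k + 1) → ℝ) → State n) (w : Fin (k + 1) → ℝ), Imm ψ x F w := by
  by_contra! hcon
  have hall : ∀ k : ℕ, ∃ (F : (Fin k → ℝ) → State n) (w : Fin k → ℝ), Imm ψ x F w := by
    intro k
    induction k with
    | zero =>
      refine ⟨fun _ => x, 0, contDiff_const, Eventually.of_forall fun _ =>
        Relation.ReflTransGen.refl, Function.injective_of_subsingleton _⟩
    | succ k ih =>
      obtain ⟨F, w, h⟩ := ih
      exact hcon k ⟨F, w, h⟩
  obtain ⟨F, w, h⟩ := hall (Module.finrank ℝ (State n) + 1)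
  have := h.le_finrank
  omega

/-- When the dimension `k` is maximal, the driving fields are tangent to the attainable families, for
otherwise a time parameter could be added. -/
lemma tan_driftU (ha : Admissible Φ) (h : IsFlow (drift n Φ) ψ)
    (hmax : ¬ ∃ (F : (Fin (k + 1) → ℝ) → State n) (w : Fin (k + 1) → ℝ), Imm ψ x F w)
    {u : ℝ} (hu : u ∈ ({-1, 0, 1} : Set ℝ)) : Tan ψ x k (driftU n Φ u) := by
  intro F w hF
  by_contra hc
  exact hmax (hF.append ha h hu hc)

lemma tan_eq_zero (ha : Admissible Φ) (h : IsFlow (drift n Φ) ψ)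
    (hmax : ¬ ∃ (F : (Fin (k + 1) → ℝ) → State n) (w : Fin (k + 1) → ℝ), Imm ψ x F w) :
    Tan ψ x k fun _ => eq' n 0 :=
  ((tan_driftU ha h hmax (u := 1) (by simp)).sub
    (tan_driftU ha h hmax (u := 0) (by simp))).congr fun z => by simp [driftU]

lemma tan_vfield (hn : 3 ≤ n) (ha : Admissible Φ) (h : IsFlow (drift n Φ) ψ)
    (hmax : ¬ ∃ (F : (Fin (k + 1) → ℝ) → State n) (w : Fin (k + 1) → ℝ), Imm ψ x F w)
    (i : ℕ) : Tan ψ x k (vfield n Φ i) := by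
  induction i with
  | zero =>
    have h1 := ((tan_eq_zero ha h hmax).bracket ha h (differentiable_const _) (u := 0)
      (by simp)).smul fun _ => -1
    refine h1.congr fun z => ?_
    simp [fderiv_drift_eq' ha, vfield, add_comm]
  | succ i ih =>
    have h1 := (ih.bracket ha h (differentiable_vfield ha i) (u := 1) (by simp)).sub
      (ih.bracket ha h (differentiable_vfield ha i) (u := 0) (by simp))
    refine h1.congr fun z => ?_
    rw [← fderiv_vfield hn ha i z, sub_sub_sub_cancel_right, ← map_sub]
    congr 1
    simp [driftU]

/-- By genericity, `∂/∂p₂ - ∂/∂p₁` is at each point a combination of the values of the fields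
`vfield n Φ i`. -/
lemma tan_ep_zero (hn : 3 ≤ n) (ha : Admissible Φ) (hg : Generic Φ) (h : IsFlow (drift n Φ) ψ)
    (hmax : ¬ ∃ (F : (Fin (k + 1) → ℝ) → State n) (w : Fin (k + 1) → ℝ), Imm ψ x F w) :
    Tan ψ x k fun _ => ep n 1 - ep n 0 := by
  intro F w hF
  by_contra hc
  obtain ⟨f, hf1, hf2⟩ := Submodule.exists_le_ker_of_notMem hc
  have := hg.eq_zero_of_iteratedDeriv ha (a := (F w).1 0 - (F w).1 1)
    (b := (F w).1 (-1) - (F w).1 0) (c₁ := f (ep n 1 - ep n 0))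
    (c₂ := f (ep n (-1) - ep n 0)) fun i => by
      have h1 : f (vfield n Φ i (F w)) = 0 := hf2 (tan_vfield hn ha h hmax i F w hF)
      rw [vfield, map_add, map_smul, map_smul, smul_eq_mul, smul_eq_mul] at h1
      linarith
  exact hf1 this.1

/-- Propagation from one particle to the next: bracketing `∂/∂p_{j+1} - ∂/∂p_j` with the drift
produces `∂/∂q_{j+1}`, and bracketing the latter with the drift produces the next momentum direction up to
the factor `Φ''(q_{j+1} - q_{j+2})`. -/
lemma tan_all (hn : 3 ≤ n) (ha : Admissible Φ) (hg : Generic Φ) (h : IsFlow (drift n Φ) ψ)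
    (hmax : ¬ ∃ (F : (Fin (k + 1) → ℝ) → State n) (w : Fin (k + 1) → ℝ), Imm ψ x F w)
    (j : Fin n) :
    (Tan ψ x k fun _ => eq' n j) ∧ Tan ψ x k fun _ => ep n (j + 1) - ep n j := by
  induction j using fin_cyclic with
  | h0 => exact ⟨tan_eq_zero ha h hmax, by simpa using tan_ep_zero hn ha hg h hmax⟩
  | hs j ih =>
    have h1 : Tan ψ x k fun _ => eq' n (j + 1) := by
      have h2 := ih.1.sub (ih.2.bracket ha h (differentiable_const _) (u := 0) (by simp))
      refine h2.congr fun z => ?_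
      simp [map_sub, fderiv_drift_ep ha]
    refine ⟨h1, Tan.isolate hn ha hg ?_ h1⟩
    have h2 := ((ih.2.smul fun z => deriv (deriv Φ) (z.1 j - z.1 (j + 1))).sub
      (h1.bracket ha h (differentiable_const _) (u := 0) (by simp)))
    refine h2.congr fun z => ?_
    rw [fderiv_drift_eq' ha, add_sub_cancel_right]
    simp only [fderiv_fun_const, Pi.zero_apply, _root_.zero_apply]
    module

lemma state_decomp (v : State n) :
    v = ∑ j, v.1 j • eq' n j + ∑ j, v.2 j • (ep n j - ep n 0) + (∑ j, v.2 j) • ep n 0 := by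
  have h1 : ∀ a : Fin n → ℝ, ∑ j, a j • (Pi.single j 1 : Fin n → ℝ) = a := fun a => by
    ext k; simp [Finset.sum_apply, Pi.single_apply]
  have e1 : ∑ j, v.1 j • eq' n j = (v.1, 0) := by
    refine Prod.ext ?_ ?_
    · simpa [Prod.fst_sum, eq'] using h1 v.1
    · simp [Prod.snd_sum, eq']
  have e2 : ∑ j, v.2 j • ep n j = (0, v.2) := by
    refine Prod.ext ?_ ?_
    · simp [Prod.fst_sum, ep]
    · simpa [Prod.snd_sum, ep] using h1 v.2
  simp only [smul_sub, Finset.sum_sub_distrib, ← Finset.sum_smul, e1, e2]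
  ext <;> simp

/-- The positions and the differences of consecutive momenta span all directions of
zero total momentum. -/
lemma sub_mem_of_gens {L : Submodule ℝ (State n)} (h1 : ∀ j, eq' n j ∈ L)
    (h2 : ∀ j, ep n (j + 1) - ep n j ∈ L) (v : State n) : v - (∑ j, v.2 j) • ep n 0 ∈ L := by
  have hep : ∀ j, ep n j - ep n 0 ∈ L := by
    intro j
    induction j using fin_cyclic with
    | h0 => simp
    | hs j ih => simpa using L.add_mem (h2 j) ih
  have e : v - (∑ j, v.2 j) • ep n 0 =
      ∑ j, v.1 j • eq' n j + ∑ j, v.2 j • (ep n j - ep n 0) := by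
    rw [sub_eq_iff_eq_add]; exact state_decomp v
  rw [e]
  exact L.add_mem (L.sum_mem fun j _ => L.smul_mem _ (h1 j))
    (L.sum_mem fun j _ => L.smul_mem _ (hep j))

/-- The set attainable from a point of the zero-momentum hyperplane has interior relative to the
hyperplane. -/
theorem exists_interior (hn : 3 ≤ n) (ha : Admissible Φ) (hg : Generic Φ)
    (h : IsFlow (drift n Φ) ψ) (hx : ∑ i, x.2 i = 0) :
    ∃ z : State n, ∑ i, z.2 i = 0 ∧ ∀ᶠ y in 𝓝 z, ∑ i, y.2 i = 0 → Reach ψ x y := by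
  obtain ⟨k, ⟨F, w, hF⟩, hmax⟩ := exists_max_imm ψ x
  have hall := tan_all hn ha hg h hmax
  have hmem : ∀ v : State n, v - (∑ j, v.2 j) • ep n 0 ∈ tgt F w :=
    sub_mem_of_gens (fun j => (hall j).1 F w hF) (fun j => (hall j).2 F w hF)
  set G : (Fin k → ℝ) × ℝ → State n := fun p => F p.1 + p.2 • ep n 0 with hG
  have hGd : HasStrictFDerivAt G ((fderiv ℝ F w).comp (ContinuousLinearMap.fst ℝ _ ℝ) +
      (ContinuousLinearMap.toSpanSingleton ℝ (ep n 0)).comp (ContinuousLinearMap.snd ℝ _ ℝ))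
      (w, 0) := by
    have h1 : HasStrictFDerivAt F (fderiv ℝ F w) (w, (0:ℝ)).1 :=
      hF.contDiff.contDiffAt.hasStrictFDerivAt one_ne_zero
    exact (h1.comp (w, (0:ℝ)) hasStrictFDerivAt_fst).add
      ((ContinuousLinearMap.toSpanSingleton ℝ (ep n 0)).hasStrictFDerivAt.comp (w, (0:ℝ))
        hasStrictFDerivAt_snd)
  have hsurj := hGd.map_nhds_eq_of_surj (LinearMap.range_eq_top.mpr fun v => by
    obtain ⟨a, ha'⟩ := mem_tgt.mp (hmem v)
    exact ⟨(a, ∑ j, v.2 j), by simp [ha', ← Finset.sum_smul]⟩)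
  have hGw : G (w, 0) = F w := by simp [hG]
  rw [hGw] at hsurj
  refine ⟨F w, ?_, ?_⟩
  · rw [hF.reach.self_of_nhds.sum_eq h, hx]
  · have h1 : ∀ᶠ p in 𝓝 (w, (0:ℝ)), Reach ψ x (F p.1) :=
      (continuous_fst.tendsto (w, (0:ℝ))).eventually hF.reach
    rw [← hsurj, eventually_map]
    filter_upwards [h1] with p hp hs
    have h2 := hp.sum_eq h
    have h3 : p.2 = 0 := by
      simpa [hG, Finset.sum_add_distrib, h2, hx, ep, ← Finset.mul_sum] using hs
    simpa [hG, h3] using hp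

end Krener

/-! ### Fields tangent to closed sets -/

section QuasiTangent

variable {E : Type*} [NormedAddCommGroup E] [NormedSpace ℝ E] [FiniteDimensional ℝ E]
  {D : Set E} {X Y : E → E}

/-- The field `X` is tangent to the set `D` to second order, uniformly on balls: from a point
`z` of `D`, the Euler step `z + t X(z)` with `t ≥ 0` small misses `D` by at most `C t²`. -/
structure QuasiTangent (D : Set E) (X : E → E) : Prop where
  contDiff : ContDiff ℝ 1 X
  step : ∀ R : ℝ, ∃ C ≥ (0:ℝ), ∃ t₀ > (0:ℝ), t₀ ≤ 1 ∧ ∀ z ∈ D, ‖z‖ ≤ R → ∀ t ∈ Icc 0 t₀,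
    ∃ z' ∈ D, ‖z' - (z + t • X z)‖ ≤ C * t ^ 2

lemma exists_bound_on_ball (hX : ContDiff ℝ 1 X) (R : ℝ) :
    ∃ M ≥ (0:ℝ), ∀ z, ‖z‖ ≤ R → ‖X z‖ ≤ M := by
  have := FiniteDimensional.proper ℝ E
  obtain ⟨M, hM⟩ := (isCompact_closedBall (0:E) R).exists_bound_of_continuousOn
    hX.continuous.continuousOn
  exact ⟨max M 0, le_max_right _ _, fun z hz =>
    (hM z (by simpa using hz)).trans (le_max_left _ _)⟩

lemma exists_lipschitz_on_ball' (hX : ContDiff ℝ 1 X) (R : ℝ) :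
    ∃ K ≥ (0:ℝ), ∀ z y, ‖z‖ ≤ R → ‖y‖ ≤ R → ‖X z - X y‖ ≤ K * ‖z - y‖ := by
  obtain ⟨K, hK⟩ := exists_lipschitz_on_ball hX R
  exact ⟨K, K.2, fun z y hz hy => by
    simpa [dist_eq_norm] using hK.dist_le_mul z (by simpa using hz) y (by simpa using hy)⟩

namespace QuasiTangent

lemma add (hX : QuasiTangent D X) (hY : QuasiTangent D Y) :
    QuasiTangent D (fun z => X z + Y z) where
  contDiff := hX.contDiff.add hY.contDiff
  step R := by
    obtain ⟨C₁, hC₁, t₁, ht₁, ht₁', h₁⟩ := hX.step R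
    obtain ⟨M, hM0, hM⟩ := exists_bound_on_ball hX.contDiff R
    obtain ⟨C₂, hC₂, t₂, ht₂, ht₂', h₂⟩ := hY.step (R + M + C₁)
    obtain ⟨K, hK0, hK⟩ := exists_lipschitz_on_ball' hY.contDiff (R + M + C₁)
    refine ⟨C₁ + C₂ + K * (M + C₁), by positivity, min t₁ t₂, lt_min ht₁ ht₂,
      (min_le_left _ _).trans ht₁', fun z hz hzR t ht => ?_⟩
    have ht0 : 0 ≤ t := ht.1
    have ht1 : t ≤ 1 := ht.2.trans ((min_le_left _ _).trans ht₁')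
    obtain ⟨z', hz', hd'⟩ := h₁ z hz hzR t ⟨ht.1, ht.2.trans (min_le_left _ _)⟩
    have hXz := hM z hzR
    have hdz : ‖z' - z‖ ≤ (M + C₁) * t := by
      calc ‖z' - z‖ = ‖(z' - (z + t • X z)) + t • X z‖ := by congr 1; abel
        _ ≤ C₁ * t ^ 2 + t * M := by
          refine (norm_add_le _ _).trans (add_le_add hd' ?_)
          rw [norm_smul, Real.norm_of_nonneg ht0]; gcongr
        _ ≤ (M + C₁) * t := by nlinarith [mul_nonneg hC₁ ht0]
    have hz'R : ‖z'‖ ≤ R + M + C₁ := by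
      have := norm_add_le z (z' - z)
      rw [add_sub_cancel] at this
      nlinarith
    obtain ⟨z'', hz'', hd''⟩ := h₂ z' hz' hz'R t ⟨ht.1, ht.2.trans (min_le_right _ _)⟩
    refine ⟨z'', hz'', ?_⟩
    have hYd : ‖Y z' - Y z‖ ≤ K * ((M + C₁) * t) :=
      (hK z' z hz'R (by linarith)).trans (by gcongr)
    calc ‖z'' - (z + t • (X z + Y z))‖
        = ‖(z'' - (z' + t • Y z')) + (z' - (z + t • X z)) + t • (Y z' - Y z)‖ := by
          congr 1; module
      _ ≤ C₂ * t ^ 2 + C₁ * t ^ 2 + t * (K * ((M + C₁) * t)) := by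
          refine (norm_add₃_le).trans (add_le_add (add_le_add hd'' hd') ?_)
          rw [norm_smul, Real.norm_of_nonneg ht0]; gcongr
      _ = (C₁ + C₂ + K * (M + C₁)) * t ^ 2 := by ring

/-- Tangency of the conjugate of a field by a translation preserving `D`. -/
lemma translate (hX : QuasiTangent D X) {c : E} (h1 : ∀ z ∈ D, z + c ∈ D)
    (h2 : ∀ z ∈ D, z - c ∈ D) : QuasiTangent D (fun z => X (z + c)) where
  contDiff := hX.contDiff.comp (contDiff_id.add contDiff_const)
  step R := by
    obtain ⟨C, hC, t₀, ht₀, ht₁, h⟩ := hX.step (R + ‖c‖)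
    refine ⟨C, hC, t₀, ht₀, ht₁, fun z hz hzR t ht => ?_⟩
    obtain ⟨z', hz', hd⟩ := h (z + c) (h1 z hz)
      ((norm_add_le _ _).trans (by linarith)) t ht
    refine ⟨z' - c, h2 z' hz', ?_⟩
    have e : z' - c - (z + t • X (z + c)) = z' - (z + c + t • X (z + c)) := by abel
    rwa [e]

/-- A field constant along its own straight lines, and tangent to the closed set `D`, has its
integral lines issued from `D` contained in `D`: the distance to `D` along such a line
satisfies a Grönwall inequality. -/
lemma integrate (hX : QuasiTangent D X) (hD : IsClosed D)
    (hc : ∀ (z : E) (t : ℝ), X (z + t • X z) = X z) {z : E} (hz : z ∈ D) {T : ℝ} (hT : 0 ≤ T) :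
    z + T • X z ∈ D := by
  have := FiniteDimensional.proper ℝ E
  set w : ℝ → E := fun t => z + t • X z with hw
  have hwX : ∀ t, X (w t) = X z := fun t => hc z t
  set R := ‖z‖ + 2 * (T * ‖X z‖) with hR
  obtain ⟨C, hC, t₀, ht₀, ht₁, h⟩ := hX.step R
  obtain ⟨K, hK0, hK⟩ := exists_lipschitz_on_ball' hX.contDiff R
  set d : ℝ → ℝ := fun t => infDist (w t) D with hd
  have hwc : Continuous w := by fun_prop
  have hdc : Continuous d := (continuous_infDist_pt D).comp hwc
  have hbound := le_gronwallBound_of_liminf_deriv_right_le (f := d) (f' := fun t => K * d t)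
    (δ := 0) (K := K) (ε := 0) (a := 0) (b := T) hdc.continuousOn (by
      intro s hs r hr
      obtain ⟨y, hy, hye⟩ := hD.exists_infDist_eq_dist ⟨z, hz⟩ (w s)
      have hsT : s * ‖X z‖ ≤ T * ‖X z‖ := by have := hs.2.le; gcongr
      have hws : ‖w s - z‖ ≤ T * ‖X z‖ := by
        simp only [hw, add_sub_cancel_left, norm_smul, Real.norm_of_nonneg hs.1]
        exact hsT
      have hwy : ‖w s - y‖ ≤ T * ‖X z‖ := by
        rw [← dist_eq_norm, ← hye]
        exact (infDist_le_dist_of_mem hz).trans (by rwa [dist_eq_norm])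
      have hwR' : ‖w s‖ ≤ ‖z‖ + T * ‖X z‖ := by
        have := norm_add_le z (w s - z)
        rw [add_sub_cancel] at this; linarith
      have hTX : 0 ≤ T * ‖X z‖ := by positivity
      have hwR : ‖w s‖ ≤ R := by linarith
      have hyR : ‖y‖ ≤ R := by
        have := norm_sub_le (w s) (w s - y)
        rw [sub_sub_cancel] at this; linarith
      have hlim : Tendsto (fun τ : ℝ => K * d s + C * (τ - s)) (𝓝[>] s) (𝓝 (K * d s)) := by
        have : Continuous (fun τ : ℝ => K * d s + C * (τ - s)) := by fun_prop
        have := this.tendsto s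
        simp only [sub_self, mul_zero, add_zero] at this
        exact this.mono_left nhdsWithin_le_nhds
      have hr' := hlim.eventually (eventually_lt_nhds hr)
      have hnear : ∀ᶠ τ in 𝓝[>] s, τ ∈ Ioc s (s + t₀) :=
        Ioc_mem_nhdsGT (by linarith)
      refine Eventually.frequently ?_
      filter_upwards [hr', hnear] with τ h1 h2
      have hτ : 0 < τ - s := by linarith [h2.1]
      obtain ⟨y', hy', hd'⟩ := h y hy hyR (τ - s) ⟨hτ.le, by linarith [h2.2]⟩
      have hde : d s = ‖w s - y‖ := by rw [← dist_eq_norm, ← hye]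
      have hle : d τ ≤ d s + (τ - s) * (K * d s) + C * (τ - s) ^ 2 := by
        calc d τ ≤ ‖w τ - y'‖ := by
              rw [← dist_eq_norm]; exact infDist_le_dist_of_mem hy'
          _ = ‖(w s - y) + (τ - s) • (X (w s) - X y) - (y' - (y + (τ - s) • X y))‖ := by
              rw [hwX]; simp only [hw]; congr 1; module
          _ ≤ d s + (τ - s) * (K * d s) + C * (τ - s) ^ 2 := by
              refine (norm_sub_le _ _).trans (add_le_add ((norm_add_le _ _).trans
                (add_le_add hde.ge ?_)) hd')
              rw [norm_smul, Real.norm_of_nonneg hτ.le, hde]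
              gcongr
              exact hK _ _ hwR hyR
      refine lt_of_le_of_lt ?_ h1
      rw [inv_mul_le_iff₀ hτ]
      nlinarith) (by
      simp only [hd, hw, zero_smul, add_zero]
      exact (infDist_zero_of_mem hz).le) (by simp) T ⟨hT, le_rfl⟩
  rw [gronwallBound_ε0, zero_mul] at hbound
  exact (hD.mem_iff_infDist_zero ⟨z, hz⟩).mpr (le_antisymm hbound infDist_nonneg)

end QuasiTangent

lemma IsFlow.neg {ψ : ℝ → E → E} (h : IsFlow X ψ) :
    IsFlow (fun z => -X z) (fun t => ψ (-t)) where
  zero z := by simp [h.zero]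
  deriv z t := by
    have := (h.deriv z (-t)).scomp t (hasDerivAt_neg t)
    simpa [Function.comp_def] using this
  bdd r T := by
    obtain ⟨R, hR⟩ := h.bdd r T
    exact ⟨R, fun z hz t ht => hR z hz (-t) (by simpa using ht)⟩

/-- A set invariant under the flow for times in `[0,1]` has the generating field tangent to it. -/
lemma IsFlow.quasiTangent {ψ : ℝ → E → E} (h : IsFlow X ψ) (hX : ContDiff ℝ 1 X)
    (hD : ∀ z ∈ D, ∀ t ∈ Icc (0:ℝ) 1, ψ t z ∈ D) : QuasiTangent D X where
  contDiff := hX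
  step R := by
    obtain ⟨R', hR'⟩ := h.bdd R 1
    obtain ⟨M, hM0, hM⟩ := exists_bound_on_ball hX R'
    obtain ⟨K, hK0, hK⟩ := exists_lipschitz_on_ball' hX R'
    refine ⟨K * M, by positivity, 1, one_pos, le_rfl, fun z hz hzR t ht =>
      ⟨ψ t z, hD z hz t ht, ?_⟩⟩
    have hin : ∀ s ∈ Icc (0:ℝ) t, ‖ψ s z‖ ≤ R' := fun s hs => by
      simpa using hR' z (by simpa using hzR) s (abs_le.mpr ⟨by linarith [hs.1], hs.2.trans ht.2⟩)
    have hz' : ‖z‖ ≤ R' := by have := hin 0 ⟨le_rfl, ht.1⟩; rwa [h.zero] at this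
    have h1 : ∀ s ∈ Icc (0:ℝ) t, ‖ψ s z - z‖ ≤ M * s := by
      have := norm_image_sub_le_of_norm_deriv_le_segment' (f := fun s => ψ s z) (a := 0) (b := t)
        (C := M) (fun s _ => (h.deriv z s).hasDerivWithinAt)
        (fun s hs => hM _ (hin s ⟨hs.1, hs.2.le⟩))
      simpa [h.zero] using this
    have h2 := norm_image_sub_le_of_norm_deriv_le_segment' (f := fun s => ψ s z - s • X z)
      (a := 0) (b := t) (C := K * (M * t)) (fun s _ => ((h.deriv z s).fun_sub
        ((hasDerivAt_id s).smul_const (X z))).hasDerivWithinAt) (fun s hs => by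
          have hs' : s ∈ Icc (0:ℝ) t := ⟨hs.1, hs.2.le⟩
          rw [one_smul]
          refine (hK _ _ (hin s hs') hz').trans ?_
          have := h1 s hs'
          have h3 : M * s ≤ M * t := by have := hs.2.le; gcongr
          gcongr
          exact this.trans h3) t ⟨ht.1, le_rfl⟩
    simp only [h.zero, zero_smul, sub_zero] at h2
    calc ‖ψ t z - (z + t • X z)‖ = ‖ψ t z - t • X z - z‖ := by congr 1; abel
      _ ≤ K * (M * t) * t := h2
      _ = K * M * t ^ 2 := by ring

end QuasiTangent

/-! ### Recurrence of the free motion -/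

section Recurrence

variable {n : ℕ} [NeZero n] {Φ : ℝ → ℝ} {ψ : ℝ → State n → State n} {x : State n}

/-- The projection onto the zero-momentum hyperplane which subtracts the mean momentum. -/
def mproj (z : State n) : State n := (z.1, fun k => z.2 k - (∑ j, z.2 j) / n)

lemma continuous_mproj : Continuous (mproj (n := n)) := by unfold mproj; fun_prop

lemma sum_mproj (z : State n) : ∑ k, (mproj z).2 k = 0 := by
  have hn : (n : ℝ) ≠ 0 := Nat.cast_ne_zero.mpr (NeZero.ne n)
  simp only [mproj, Finset.sum_sub_distrib, Finset.sum_const, Finset.card_univ, Fintype.card_fin,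
    nsmul_eq_mul]
  field_simp
  ring

lemma mproj_eq {z : State n} (hz : ∑ k, z.2 k = 0) : mproj z = z := by simp [mproj, hz]

lemma mproj_add (z : State n) : mproj z + (0, fun _ => (∑ j, z.2 j) / n) = z := by
  ext k <;> simp [mproj]

lemma chi_eq (ha : Admissible Φ) (h : IsFlow (drift n Φ) ψ) (t : ℝ) (z : State n) :
    chi ψ t z = ψ t (mproj z) + (0, fun _ => (∑ j, z.2 j) / n) := by
  have h1 := flow_add_const ha h t ((∑ j, z.2 j) / n) (mproj z)
  rw [mproj_add] at h1
  rw [chi, comShift_apply, sum_flow_snd h, h1]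
  ext k <;> simp

lemma sum_chi_snd (h : IsFlow (drift n Φ) ψ) (t : ℝ) (z : State n) :
    ∑ k, (chi ψ t z).2 k = ∑ k, z.2 k := by
  rw [chi, comShift_apply]; exact sum_flow_snd h t z

lemma mproj_chi (ha : Admissible Φ) (h : IsFlow (drift n Φ) ψ) (t : ℝ) (z : State n) :
    mproj (chi ψ t z) = ψ t (mproj z) := by
  refine add_right_cancel (b := ((0, fun _ => (∑ j, z.2 j) / n) : State n)) ?_
  rw [← chi_eq ha h, ← sum_chi_snd h t z, mproj_add]

lemma sum_chi_fst (ha : Admissible Φ) (h : IsFlow (drift n Φ) ψ) (t : ℝ) (z : State n) :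
    ∑ k, (chi ψ t z).1 k = ∑ k, z.1 k := by
  rw [chi_eq ha h]
  have := sum_flow_fst h t (mproj z)
  rw [sum_mproj, mul_zero, add_zero] at this
  simpa [mproj] using this

/-- A bounded region of the full phase space, invariant under the motion in the centre-of-mass frame:
the energy relative to the centre of mass, the centre of mass and the total momentum are bounded. -/
def region (n : ℕ) [NeZero n] (Φ : ℝ → ℝ) (C R : ℝ) : Set (State n) :=
  {z | energy n Φ (mproj z) < C ∧ |∑ k, z.1 k| < R ∧ |∑ k, z.2 k| < 1}

lemma isOpen_region (ha : Admissible Φ) (C R : ℝ) : IsOpen (region n Φ C R) := by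
  have h1 : Continuous fun z : State n => |∑ k, z.1 k| := by fun_prop
  have h2 : Continuous fun z : State n => |∑ k, z.2 k| := by fun_prop
  exact (isOpen_lt ((continuous_energy ha).comp continuous_mproj) continuous_const).inter
    ((isOpen_lt h1 continuous_const).inter (isOpen_lt h2 continuous_const))

lemma chi_mem_region (ha : Admissible Φ) (h : IsFlow (drift n Φ) ψ) {C R : ℝ} (t : ℝ)
    {z : State n} (hz : z ∈ region n Φ C R) : chi ψ t z ∈ region n Φ C R := by
  refine ⟨?_, ?_, ?_⟩
  · rw [mproj_chi ha h, energy_flow ha h]; exact hz.1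
  · rw [sum_chi_fst ha h]; exact hz.2.1
  · rw [sum_chi_snd h]; exact hz.2.2

/-- On a cycle, one-sided bounds on the consecutive differences bound all differences. -/
lemma cyclic_diff_le {q : Fin n → ℝ} {B : ℝ} (hB : 0 ≤ B) (hq : ∀ k, q k - q (k + 1) ≤ B)
    (i j : Fin n) : q i - q j ≤ n * B := by
  have h1 : ∀ m : ℕ, q i - q (i + Fin.ofNat n m) ≤ m * B := by
    intro m
    induction m with
    | zero => simp
    | succ m ih =>
      have e : Fin.ofNat n (m + 1) = Fin.ofNat n m + 1 := by ext; simp [Fin.val_add]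
      have := hq (i + Fin.ofNat n m)
      rw [e, ← add_assoc]; push_cast; linarith
  have h2 := h1 (j - i).val
  have e : i + Fin.ofNat n (j - i).val = j := by simp
  rw [e] at h2
  have h3 : ((j - i).val : ℝ) ≤ n := by exact_mod_cast (j - i).isLt.le
  exact h2.trans (by gcongr)

/-- The region is bounded because `Φ` is bounded below and tends to infinity at `+∞`. -/
lemma isBounded_region (ha : Admissible Φ) (C R : ℝ) :
    Bornology.IsBounded (region n Φ C R) := by
  obtain ⟨m, hm⟩ := ha.2.1
  have hm : ∀ y, m ≤ Φ y := fun y => hm ⟨y, rfl⟩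
  obtain ⟨B, hB⟩ := eventually_atTop.mp
    (ha.2.2.eventually (eventually_ge_atTop (C - n * m + m)))
  set B' := max B 0 with hB'
  have hn1 : (1:ℝ) ≤ n := by exact_mod_cast NeZero.one_le
  set P := 2 * (C - n * m) + 2 with hP
  refine (isBounded_closedBall (x := (0 : State n)) (r := max (R + n * B') P)).subset
    fun z hz => ?_
  obtain ⟨h1, h2, h3⟩ := hz
  have hsq := sq_le_of_energy hm (mproj z)
  have hdiff : ∀ k, z.1 k - z.1 (k + 1) ≤ B' := by
    intro k
    by_contra! hk
    have h4 := hB (z.1 k - z.1 (k + 1)) ((le_max_left _ _).trans hk.le)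
    have h5 : ∑ j, (Φ (z.1 j - z.1 (j + 1)) - m) ≥ Φ (z.1 k - z.1 (k + 1)) - m :=
      Finset.single_le_sum (f := fun j => Φ (z.1 j - z.1 (j + 1)) - m)
        (fun j _ => sub_nonneg.mpr (hm _)) (Finset.mem_univ k)
    rw [Finset.sum_sub_distrib] at h5
    simp only [Finset.sum_const, Finset.card_univ, Fintype.card_fin, nsmul_eq_mul] at h5
    have h6 : 0 ≤ ∑ k, ((mproj z).2 k) ^ 2 / 2 := Finset.sum_nonneg fun j _ => by positivity
    have h7 : energy n Φ (mproj z) =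
      ∑ k, ((mproj z).2 k) ^ 2 / 2 + ∑ j, Φ (z.1 j - z.1 (j + 1)) := rfl
    linarith
  have hd := cyclic_diff_le (le_max_right B 0) hdiff
  have hq : ∀ k, |z.1 k| ≤ R + n * B' := by
    intro k
    have e1 : ∑ j : Fin n, (z.1 k - z.1 j) = n * z.1 k - ∑ j, z.1 j := by
      simp [Finset.sum_sub_distrib]
    have e2 : ∑ j : Fin n, (z.1 j - z.1 k) = ∑ j, z.1 j - n * z.1 k := by
      simp [Finset.sum_sub_distrib]
    have h5 : ∑ j : Fin n, (z.1 k - z.1 j) ≤ n * (n * B') := by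
      have := Finset.sum_le_sum fun j (_ : j ∈ Finset.univ) => hd k j
      simpa using this
    have h6 : ∑ j : Fin n, (z.1 j - z.1 k) ≤ n * (n * B') := by
      have := Finset.sum_le_sum fun j (_ : j ∈ Finset.univ) => hd j k
      simpa using this
    obtain ⟨h7, h8⟩ := abs_lt.mp h2
    have hR : 0 ≤ R := (abs_nonneg _).trans h2.le
    have h9 : R ≤ n * R := by nlinarith
    rw [abs_le]
    constructor
    · by_contra! hc
      nlinarith
    · by_contra! hc
      nlinarith
  have hp : ∀ k, |z.2 k| ≤ P := by
    intro k
    have h4 := hsq k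
    have h5 : |(mproj z).2 k| ≤ 2 * (C - n * m) + 1 := by
      have h6 : 0 ≤ ((mproj z).2 k) ^ 2 := sq_nonneg _
      rw [← sq_abs] at h4 h6
      nlinarith [abs_nonneg ((mproj z).2 k), sq_nonneg (|(mproj z).2 k| - 1)]
    have h6 : z.2 k = (mproj z).2 k + (∑ j, z.2 j) / n := by simp [mproj]
    have h7 : |(∑ j, z.2 j) / (n : ℝ)| ≤ 1 := by
      rw [abs_div, Nat.abs_cast, div_le_one (by linarith)]; linarith
    rw [h6]
    exact (abs_add_le _ _).trans (by linarith)
  rw [mem_closedBall_zero_iff]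
  refine max_le_max ?_ ?_
  · exact (pi_norm_le_iff_of_nonneg ((abs_nonneg _).trans (hq 0))).mpr hq
  · exact (pi_norm_le_iff_of_nonneg ((abs_nonneg _).trans (hp 0))).mpr hp

/-- The relative interior in the zero-momentum hyperplane of the set attainable from `x`. -/
def attain (ψ : ℝ → State n → State n) (x : State n) : Set (State n) :=
  {z | ∑ k, z.2 k = 0 ∧ ∀ᶠ y in 𝓝 z, ∑ k, y.2 k = 0 → Reach ψ x y}

/-- The interior of the attainable set is stable under the moves, which are homeomorphisms of the
hyperplane. -/
lemma attain_flowU (ha : Admissible Φ) (h : IsFlow (drift n Φ) ψ) {z : State n}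
    (hz : z ∈ attain ψ x) {u : ℝ} (hu : u ∈ ({-1, 0, 1} : Set ℝ)) {t : ℝ} (ht : 0 ≤ t) :
    flowU ψ u t z ∈ attain ψ x := by
  refine ⟨by rw [sum_flowU h]; exact hz.1, ?_⟩
  have hc : Tendsto (flowU ψ u (-t)) (𝓝 (flowU ψ u t z)) (𝓝 z) := by
    have := ((h.flowU u).contDiff_time (contDiff_driftU ha u) (-t)).continuous.tendsto
      (flowU ψ u t z)
    rwa [(h.flowU u).neg_cancel (contDiff_driftU ha u)] at this
  filter_upwards [hc.eventually hz.2] with y hy hs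
  have h1 := (hy (by rw [sum_flowU h]; exact hs)).flowU hu ht
  rwa [(h.flowU u).cancel_neg (contDiff_driftU ha u)] at h1

lemma isOpen_preimage_attain : IsOpen (mproj ⁻¹' attain ψ x) := by
  rw [isOpen_iff_mem_nhds]
  intro z hz
  have h1 := continuous_mproj.continuousAt.eventually (eventually_eventually_nhds.mpr hz.2)
  filter_upwards [h1] with y hy
  exact ⟨sum_mproj y, hy⟩

/-- The measure-theoretic core of Poincaré recurrence: a volume-preserving map of `W` into itself
leaves no room in `W` for the image of an open set `V` disjoint from `W`. -/
lemma eq_empty_of_maps {α : Type*} [TopologicalSpace α] [MeasurableSpace α]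
    [OpensMeasurableSpace α] {μ : Measure α} [μ.IsOpenPosMeasure] {T : α → α} {W V : Set α}
    (hT : ∀ s, MeasurableSet s → μ (T '' s) = μ s) (hW : IsOpen W) (hV : IsOpen V)
    (hWW : MapsTo T W W) (hVW : MapsTo T V W) (hd : Disjoint W V) (hf : μ W ≠ ⊤) : V = ∅ := by
  have h1 : μ (W ∪ V) ≤ μ W := by
    rw [← hT _ (hW.union hV).measurableSet]
    exact measure_mono (image_subset_iff.mpr (union_subset hWW hVW))
  rw [measure_union hd hV.measurableSet] at h1
  have h2 : μ V = 0 := by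
    by_contra h0
    exact absurd h1 (not_le.mpr (ENNReal.lt_add_right hf h0))
  exact hV.measure_eq_zero_iff μ |>.mp h2

/-- Recurrence: the free motion can be reversed up to closure. -/
lemma flow_neg_mem_closure (ha : Admissible Φ) (h : IsFlow (drift n Φ) ψ) {z : State n}
    (hz : z ∈ attain ψ x) {t : ℝ} (ht : t ∈ Icc (0:ℝ) 1) :
    ψ (-t) z ∈ closure (attain ψ x) := by
  by_contra hc
  set z' := ψ (-t) z with hz'
  have hs' : ∑ k, z'.2 k = 0 := by rw [hz', sum_flow_snd h]; exact hz.1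
  have hψ : ∀ y, flowU ψ 0 t y = ψ t y := fun y => by simp [flowU]
  set K := region n Φ (energy n Φ z + 1) (|∑ k, z'.1 k| + 1)
  have hKo : IsOpen K := isOpen_region ha _ _
  have hW : IsOpen (mproj ⁻¹' attain ψ x ∩ K) := isOpen_preimage_attain.inter hKo
  have hchi : Continuous (chi ψ t) :=
    (comShift n t).continuous.comp (h.contDiff_time (contDiff_drift ha) t).continuous
  have hV : IsOpen (K ∩ mproj ⁻¹' (closure (attain ψ x))ᶜ ∩
      chi ψ t ⁻¹' (mproj ⁻¹' attain ψ x ∩ K)) :=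
    (hKo.inter (isClosed_closure.isOpen_compl.preimage continuous_mproj)).inter (hW.preimage hchi)
  have hempty := eq_empty_of_maps (μ := volume) (T := chi ψ t)
    (fun s hs => volume_image_chi ha h ht hs) hW hV
    (fun y hy => ⟨by
      have h1 := attain_flowU ha h hy.1 (u := 0) (by simp) ht.1
      rw [hψ] at h1
      rwa [mem_preimage, mproj_chi ha h], chi_mem_region ha h t hy.2⟩)
    (fun y hy => hy.2)
    (disjoint_left.mpr fun y hy1 hy2 => hy2.1.2 (subset_closure hy1.1))
    (((isBounded_region ha _ _).subset inter_subset_right).measure_lt_top).ne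
  have hzK : z' ∈ K := by
    refine ⟨?_, by linarith, by rw [hs']; simp⟩
    rw [mproj_eq hs', hz', energy_flow ha h]; linarith
  have hmem : z' ∈ K ∩ mproj ⁻¹' (closure (attain ψ x))ᶜ ∩
      chi ψ t ⁻¹' (mproj ⁻¹' attain ψ x ∩ K) := by
    refine ⟨⟨hzK, by rw [mem_preimage, mproj_eq hs']; exact hc⟩, ?_, chi_mem_region ha h t hzK⟩
    rw [mem_preimage, mproj_chi ha h, mproj_eq hs', hz', h.cancel_neg (contDiff_drift ha)]
    exact hz
  rw [hempty] at hmem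
  exact hmem

end Recurrence

/-! ### Density of the attainable sets and attainability -/

section Density

variable {n : ℕ} [NeZero n] {Φ : ℝ → ℝ} {ψ : ℝ → State n → State n} {x : State n}

/-- The directions along which all translations preserve `D`. -/
def transSub (D : Set (State n)) : Submodule ℝ (State n) where
  carrier := {v | ∀ y ∈ D, ∀ t : ℝ, y + t • v ∈ D}
  zero_mem' := fun y hy t => by simpa using hy
  add_mem' := fun {v w} hv hw y hy t => by
    rw [smul_add, ← add_assoc]; exact hw _ (hv y hy t) t
  smul_mem' := fun c v hv y hy t => by rw [smul_smul]; exact hv y hy _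

/-- The vertical directions along which all translations preserve the fibre of `D` over the
configuration of `z`. -/
def vertSub (D : Set (State n)) (z : State n) : Submodule ℝ (State n) where
  carrier := {v | v.1 = 0 ∧ ∀ y ∈ D, y.1 = z.1 → ∀ t : ℝ, y + t • v ∈ D}
  zero_mem' := ⟨rfl, fun y hy _ t => by simpa using hy⟩
  add_mem' := fun {v w} hv hw => ⟨by simp [hv.1, hw.1], fun y hy hyz t => by
    rw [smul_add, ← add_assoc]; exact hw.2 _ (hv.2 y hy hyz t) (by simp [hyz, hv.1]) t⟩
  smul_mem' := fun c v hv => ⟨by simp [hv.1], fun y hy hyz t => by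
    rw [smul_smul]; exact hv.2 y hy hyz _⟩

/-- Translating one position by `l` changes the drift by a vertical field. -/
lemma drift_shift (hn : 3 ≤ n) (j : Fin n) (l : ℝ) (z : State n) :
    drift n Φ (z + l • eq' n j) - drift n Φ z =
      (deriv Φ (z.1 j - z.1 (j + 1) + l) - deriv Φ (z.1 j - z.1 (j + 1))) •
        (ep n (j + 1) - ep n j) -
      (deriv Φ (z.1 (j - 1) - z.1 j - l) - deriv Φ (z.1 (j - 1) - z.1 j)) •
        (ep n (j - 1) - ep n j) := by
  set c : Fin n → ℝ := fun k => deriv Φ ((z + l • eq' n j).1 k - (z + l • eq' n j).1 (k + 1)) -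
    deriv Φ (z.1 k - z.1 (k + 1)) with hc
  set a := deriv Φ (z.1 j - z.1 (j + 1) + l) - deriv Φ (z.1 j - z.1 (j + 1)) with ha
  set b := deriv Φ (z.1 (j - 1) - z.1 j - l) - deriv Φ (z.1 (j - 1) - z.1 j) with hb
  have hck : ∀ k, c k = a * (Pi.single j 1 : Fin n → ℝ) k +
      b * (Pi.single (j - 1) 1 : Fin n → ℝ) k := by
    intro k
    have n1 := fin_add_one_ne hn j
    have n2 := fin_sub_one_ne hn j
    by_cases h1 : k = j
    · subst h1
      have e : z.1 k + l - z.1 (k + 1) = z.1 k - z.1 (k + 1) + l := by ring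
      simp [hc, ha, eq', n1, n2.symm, e]
    · by_cases h2 : k = j - 1
      · subst h2
        have e : z.1 (j - 1) - (z.1 j + l) = z.1 (j - 1) - z.1 j - l := by ring
        simp [hc, hb, eq', n2, e]
      · have h3 : k + 1 ≠ j := fun h => h2 (by rw [← h, add_sub_cancel_right])
        simp [hc, eq', h1, h2, h3]
  refine Prod.ext ?_ ?_
  · ext k; simp [drift, ep, eq']
  · funext k
    have h1 : (drift n Φ (z + l • eq' n j) - drift n Φ z).2 k = c (k - 1) - c k := by
      simp only [drift, hc, Prod.snd_sub, Pi.sub_apply, sub_add_cancel]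
      ring
    have e1 : (Pi.single j 1 : Fin n → ℝ) (k - 1) = (Pi.single (j + 1) 1 : Fin n → ℝ) k := by
      simp only [Pi.single_apply, sub_eq_iff_eq_add]
    have e2 : (Pi.single (j - 1) 1 : Fin n → ℝ) (k - 1) = (Pi.single j 1 : Fin n → ℝ) k := by
      simp only [Pi.single_apply, sub_left_inj]
    rw [h1, hck, hck, e1, e2]
    simp only [ep, Prod.snd_sub, Prod.smul_snd, Pi.sub_apply, Pi.smul_apply, smul_eq_mul]
    ring

variable {D : Set (State n)}

lemma QuasiTangent.integrate_both {X : State n → State n} (hD : IsClosed D)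
    (h1 : QuasiTangent D X) (h2 : QuasiTangent D fun z => -X z)
    (hc : ∀ (z : State n) (t : ℝ), X (z + t • X z) = X z) {z : State n} (hz : z ∈ D) (t : ℝ) :
    z + t • X z ∈ D := by
  rcases le_total 0 t with ht | ht
  · exact h1.integrate hD hc hz ht
  · have h3 := h2.integrate hD (fun z s => by
      have := hc z (-s); rw [neg_smul, ← smul_neg] at this; rw [this]) hz (neg_nonneg.mpr ht)
    simpa using h3

lemma mem_transSub_of_const {c : State n} (hD : IsClosed D)
    (h1 : QuasiTangent D fun _ => c) (h2 : QuasiTangent D fun _ => -c) : c ∈ transSub D :=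
  fun _ hy t => h1.integrate_both hD h2 (fun _ _ => rfl) hy t

/-- Tangency to `D` of the difference between a translate of the drift and the drift. -/
lemma quasiTangent_diff (hf : QuasiTangent D (drift n Φ))
    (hf' : QuasiTangent D fun z => -drift n Φ z) {c : State n} (hc : c ∈ transSub D) :
    (QuasiTangent D fun z => drift n Φ (z + c) - drift n Φ z) ∧
      QuasiTangent D fun z => -(drift n Φ (z + c) - drift n Φ z) := by
  have h1 : ∀ z ∈ D, z + c ∈ D := fun z hz => by simpa using hc z hz 1
  have h2 : ∀ z ∈ D, z - c ∈ D := fun z hz => by simpa [sub_eq_add_neg] using hc z hz (-1)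
  constructor
  · have := (hf.translate h1 h2).add hf'
    simpa only [sub_eq_add_neg] using this
  · have := (hf'.translate h1 h2).add hf
    have e : (fun z => -(drift n Φ (z + c) - drift n Φ z)) =
        fun z => -drift n Φ (z + c) + drift n Φ z := by funext z; abel
    rwa [e]

/-- Invariance under translations of `q_j` gives invariance under `∂/∂p_{j+1} - ∂/∂p_j`: the
differences of translated drifts are vertical fields constant on the fibres, they integrate to translations
of the fibres, and by genericity they span both vertical directions adjacent to `j`. -/
lemma ep_mem_transSub (hn : 3 ≤ n) (ha : Admissible Φ) (hg : Generic Φ)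
    (hD : IsClosed D) (hf : QuasiTangent D (drift n Φ))
    (hf' : QuasiTangent D fun z => -drift n Φ z) {j : Fin n} (hj : eq' n j ∈ transSub D) :
    ep n (j + 1) - ep n j ∈ transSub D := by
  have hdep : ∀ l : ℝ, ∀ y z : State n, y.1 = z.1 →
      drift n Φ (y + l • eq' n j) - drift n Φ y = drift n Φ (z + l • eq' n j) - drift n Φ z := by
    intro l y z hyz
    rw [drift_shift hn, drift_shift hn, hyz]
  have hvert : ∀ l : ℝ, ∀ z : State n,
      (drift n Φ (z + l • eq' n j) - drift n Φ z).1 = 0 := by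
    intro l z
    rw [drift_shift hn]; simp [ep]
  have hmem : ∀ l : ℝ, ∀ z : State n,
      drift n Φ (z + l • eq' n j) - drift n Φ z ∈ vertSub D z := by
    intro l z
    refine ⟨hvert l z, fun y hy hyz t => ?_⟩
    obtain ⟨h1, h2⟩ := quasiTangent_diff hf hf' ((transSub D).smul_mem l hj)
    rw [← hdep l y z hyz]
    exact h1.integrate_both hD h2 (fun z t => hdep l _ _ (by
      rw [Prod.fst_add, Prod.smul_fst, hvert, smul_zero, add_zero])) hy t
  intro z hz t
  suffices h : ep n (j + 1) - ep n j ∈ vertSub D z from h.2 z hz rfl t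
  by_contra hc
  obtain ⟨f, hf1, hf2⟩ := Submodule.exists_le_ker_of_notMem hc
  have hker : ∀ l : ℝ, (deriv Φ (z.1 j - z.1 (j + 1) + l) - deriv Φ (z.1 j - z.1 (j + 1))) *
        f (ep n (j + 1) - ep n j) -
      (deriv Φ (z.1 (j - 1) - z.1 j - l) - deriv Φ (z.1 (j - 1) - z.1 j)) *
        f (ep n (j - 1) - ep n j) = 0 := fun l => by
    have h1 : f (drift n Φ (z + l • eq' n j) - drift n Φ z) = 0 := hf2 (hmem l z)
    rwa [drift_shift hn, map_sub f, map_smul, map_smul, smul_eq_mul, smul_eq_mul] at h1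
  refine hf1 (hg.eq_zero (c₁ := f (ep n (j + 1) - ep n j)) (c₂ := f (ep n (j - 1) - ep n j))
    (a := z.1 j - z.1 (j + 1)) (b := z.1 (j - 1) - z.1 j) fun s => ?_).1
  have d1 := (ha.hasDerivAt_deriv (z.1 j - z.1 (j + 1) + s)).comp_const_add _ s
  have d2 := (ha.hasDerivAt_deriv (z.1 (j - 1) - z.1 j - s)).comp_const_sub _ s
  have d3 := ((d1.sub_const (deriv Φ (z.1 j - z.1 (j + 1)))).mul_const
    (f (ep n (j + 1) - ep n j))).fun_sub ((d2.sub_const (deriv Φ (z.1 (j - 1) - z.1 j))).mul_const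
    (f (ep n (j - 1) - ep n j)))
  have d4 : HasDerivAt (fun _ : ℝ => (0:ℝ)) _ s :=
    d3.congr_of_eventuallyEq (Eventually.of_forall fun l => (hker l).symm)
  have := d4.unique (hasDerivAt_const s (0:ℝ))
  linarith

/-- Translating the drift by `∂/∂p_{j+1} - ∂/∂p_j` changes it by the constant field
`∂/∂q_{j+1} - ∂/∂q_j`. -/
lemma eq_mem_transSub (hD : IsClosed D) (hf : QuasiTangent D (drift n Φ))
    (hf' : QuasiTangent D fun z => -drift n Φ z) {j : Fin n} (hj : eq' n j ∈ transSub D)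
    (hj' : ep n (j + 1) - ep n j ∈ transSub D) : eq' n (j + 1) ∈ transSub D := by
  obtain ⟨h1, h2⟩ := quasiTangent_diff hf hf' hj'
  have e : ∀ z, drift n Φ (z + (ep n (j + 1) - ep n j)) - drift n Φ z = eq' n (j + 1) - eq' n j := by
    intro z
    ext k <;> simp [drift, ep, eq']
  simp only [e] at h1 h2
  have := (transSub D).add_mem (mem_transSub_of_const hD h1 h2) hj
  simpa using this

/-- A closed set tangent to the driving fields and to the reversed drift is invariant under all
translations by vectors of zero total momentum. -/
lemma mem_transSub (hn : 3 ≤ n) (ha : Admissible Φ) (hg : Generic Φ)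
    (hD : IsClosed D) (hf : QuasiTangent D (drift n Φ))
    (hf' : QuasiTangent D fun z => -drift n Φ z)
    (h1 : QuasiTangent D (driftU n Φ 1)) (h2 : QuasiTangent D (driftU n Φ (-1)))
    {v : State n} (hv : ∑ k, v.2 k = 0) : v ∈ transSub D := by
  have h0 : eq' n 0 ∈ transSub D := by
    have e1 := h1.add hf'
    have e2 := h2.add hf'
    have c1 : (fun z => driftU n Φ 1 z + -drift n Φ z) = fun _ => eq' n 0 := by
      funext z; simp [driftU]
    have c2 : (fun z => driftU n Φ (-1) z + -drift n Φ z) = fun _ => -eq' n 0 := by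
      funext z; simp [driftU]
    rw [c1] at e1
    rw [c2] at e2
    exact mem_transSub_of_const hD e1 e2
  have hq : ∀ j, eq' n j ∈ transSub D := by
    intro j
    induction j using fin_cyclic with
    | h0 => exact h0
    | hs j ih => exact eq_mem_transSub hD hf hf' ih (ep_mem_transSub hn ha hg hD hf hf' ih)
  have := sub_mem_of_gens hq (fun j => ep_mem_transSub hn ha hg hD hf hf' (hq j)) v
  simpa [hv] using this

/-- The interior of the attainable set is dense in the zero-momentum hyperplane. -/
theorem mem_closure_attain (hn : 3 ≤ n) (ha : Admissible Φ) (hg : Generic Φ)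
    (h : IsFlow (drift n Φ) ψ) (hx : ∑ i, x.2 i = 0) {y : State n} (hy : ∑ i, y.2 i = 0) :
    y ∈ closure (attain ψ x) := by
  have hU : ∀ u ∈ ({-1, 0, 1} : Set ℝ),
      QuasiTangent (closure (attain ψ x)) (driftU n Φ u) := fun u hu =>
    (h.flowU u).quasiTangent (contDiff_driftU ha u) fun z hz t ht =>
      map_mem_closure ((h.flowU u).contDiff_time (contDiff_driftU ha u) t).continuous hz
        fun z hz => attain_flowU ha h hz hu ht.1
  have hf : QuasiTangent (closure (attain ψ x)) (drift n Φ) := by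
    have e : driftU n Φ 0 = drift n Φ := by funext z; simp [driftU]
    rw [← e]; exact hU 0 (by simp)
  have hf' : QuasiTangent (closure (attain ψ x)) fun z => -drift n Φ z :=
    h.neg.quasiTangent (contDiff_drift ha).neg fun z hz t ht => by
      have := map_mem_closure (h.contDiff_time (contDiff_drift ha) (-t)).continuous hz
        (fun z hz => flow_neg_mem_closure ha h hz ht)
      rwa [closure_closure] at this
  obtain ⟨z, hz, hz'⟩ := exists_interior hn ha hg h hx
  have hzD : z ∈ closure (attain ψ x) := subset_closure ⟨hz, hz'⟩
  have hv := mem_transSub hn ha hg isClosed_closure hf hf' (hU 1 (by simp)) (hU (-1) (by simp))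
    (v := y - z) (by simp [Finset.sum_sub_distrib, hy, hz])
  simpa using hv z hzD 1

/-- By reversal of momenta, the set of points from which `y` is attainable has interior points; the
dense set of interior points attainable from `x` meets it. -/
theorem reach_all (hn : 3 ≤ n) (ha : Admissible Φ) (hg : Generic Φ)
    (h : IsFlow (drift n Φ) ψ) {y : State n} (hx : ∑ i, x.2 i = 0) (hy : ∑ i, y.2 i = 0) :
    Reach ψ x y := by
  have hrev : ∀ z : State n, ∑ i, z.2 i = 0 → ∑ i, (rev z).2 i = 0 := fun z hz => by
    simp [rev, hz]
  obtain ⟨z, hz, hz'⟩ := exists_interior hn ha hg h (hrev y hy)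
  have hc : Tendsto rev (𝓝 (rev z)) (𝓝 z) := by
    simpa [rev_rev] using continuous_rev.tendsto (rev z)
  obtain ⟨w, hw1, hw2⟩ := mem_closure_iff_nhds.mp
    (mem_closure_attain hn ha hg h hx (hrev z hz)) _ (hc.eventually hz')
  have h1 : Reach ψ x w := hw2.2.self_of_nhds hw2.1
  have h2 := Reach.rev ha h (hw1 (hrev w hw2.1))
  rw [rev_rev, rev_rev] at h2
  exact Relation.ReflTransGen.trans h1 h2

lemma Move.step (h : IsFlow (drift n Φ) ψ) {z z' : State n} (hm : Move ψ z z') :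
    Step n Φ z z' := by
  obtain ⟨u, hu, t, ht, rfl⟩ := hm
  have hfree : FreeReach n Φ (z + u • ep n 0) (flowU ψ u t z + u • ep n 0) :=
    ⟨t, ht, fun s => ψ s (z + u • ep n 0), h.zero _, fun s _ => h.deriv _ s, by simp [flowU]⟩
  rcases hu with rfl | rfl | rfl
  · exact Or.inr (Or.inr (by simpa [sub_eq_add_neg] using hfree))
  · exact Or.inl (by simpa using hfree)
  · exact Or.inr (Or.inl (by simpa using hfree))

/-- A sequence of moves, with the points visited indexed by the natural numbers. -/
lemma Reach.exists_chain {y : State n} (hr : Reach ψ x y) :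
    ∃ (m : ℕ) (z : ℕ → State n), z 0 = x ∧ z m = y ∧ (∀ i ≤ m, Reach ψ x (z i)) ∧
      ∀ i < m, Move ψ (z i) (z (i + 1)) := by
  induction hr with
  | refl => exact ⟨0, fun _ => x, rfl, rfl, fun _ _ => Relation.ReflTransGen.refl, by simp⟩
  | @tail b c hb hc ih =>
    obtain ⟨m, z, h0, hm, hz, hs⟩ := ih
    refine ⟨m + 1, fun i => if i ≤ m then z i else c, by simpa using h0, by simp, ?_, ?_⟩
    · intro i hi
      by_cases him : i ≤ m
      · simpa [him] using hz i him
      · simp only [him, if_false]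
        exact Relation.ReflTransGen.tail hb hc
    · intro i hi
      rcases Nat.lt_succ_iff_lt_or_eq.mp hi with hlt | rfl
      · have h1 : i + 1 ≤ m := hlt
        simpa [hlt.le, h1] using hs i hlt
      · simpa [hm] using hc

end Density

/-- Attainability on the zero-momentum hyperplane without reversing time:
any two points of `Π` are joined by a finite chain of points of `Π`, each step given by
one of `e^{g}∘e^{tf}∘e^{−g}`, `e^{−g}∘e^{tf}∘e^{g}`, `e^{tf}` with `t ≥ 0`. -/
theorem attainability_on_zero_momentum (n : ℕ) [NeZero n] (hn : 3 ≤ n) (Φ : ℝ → ℝ)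
    (hadm : Admissible Φ) (hgen : Generic Φ) (xtil xhat : State n)
    (hxtil : (∑ i, xtil.2 i) = 0) (hxhat : (∑ i, xhat.2 i) = 0) :
    ∃ (m : ℕ) (z : ℕ → State n),
      z 0 = xtil ∧ z m = xhat ∧
      (∀ i ≤ m, (∑ j, (z i).2 j) = 0) ∧
      (∀ i < m, Step n Φ (z i) (z (i + 1))) := by
  obtain ⟨ψ, h⟩ := exists_drift_flow n hadm
  obtain ⟨m, z, h0, hm, hz, hs⟩ := (reach_all hn hadm hgen h hxtil hxhat).exists_chain
  exact ⟨m, z, h0, hm, fun i hi => by rw [(hz i hi).sum_eq h, hxtil],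
    fun i hi => (hs i hi).step h⟩
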